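/- arXiv:2206.08086 — 2 statements merged into one kernel-verified Lean document; each statement's English description precedes it below -/
import Mathlib

section
/- There exists a constant Λ > 0 such that for every integer N ≥ 2 there is a set ω_N of N distinct points on the unit sphere S² ⊂ ℝ³ satisfying E_log(ω_N) ≤ (1/2 − log 2)·N² − (1/2)·N·log N + c_⋄·N + Λ·√N·log N. -/
/-!
The points are placed on parallels, from north to south. A band carrying `r` of the `N` points is
given area proportional to `r`; its points form a regular `r`-gon on the parallel that bisects the
area of the band, rotated by a suitable angle.

Averaged over the rotation, the sum of `log ‖x - y‖` over a point `x` at height `z'` and the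
vertices `y` of an `r`-gon at height `z < z'` is `r (log (1 + z') + log (1 - z)) / 2`, by the mean
value property of `log ‖a - β u‖` on the unit circle (`circleAverage_log_dist`). Hence each new
polygon can be rotated so that its interaction with all earlier points is no worse than this average
(`exists_rotation`). The self-energy of an `r`-gon of circumradius `ρ` is
`-r log r - r (r - 1) log ρ` (`Elog_ngon`). With these two facts the energy becomes a single sum
over the bands of
`-(N / 2) r h(z) + (r / 2) log (1 - z²) - r log r`,
where `h(z) = (1 + z) log (1 + z) + (1 - z) log (1 - z)`. The terms `h` form a midpoint rule for
`∫ h`, which produces `(1/2 - log 2) N²` up to the midpoint error. Writing `p` and `q` for the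
numbers of points north and south of the parallel (half of its own points counted on each side), so
that `1 - z² = 4 p q / N²`, the excess of a band over the main terms is `cost p q r`, which is
`r (t / 2 - (log t) / 2 - (log 3) / 2)` up to a small error, with `t = N r² / (12 p q)`. The minimum
over `t` is at `t = 1` and gives `1/2 - (log 3) / 2 ≈ -0.049306` per point.
This lies strictly below `cdiamond` (`cdiamond_lower`), so it suffices to choose `r` as the integer
part of `√(12 S (N - S) / N)`, where `S` points are already placed, once `S` and `N - S` exceed an
absolute constant (`cost_good`). Only boundedly many bands near the poles remain, each of bounded
cost (`cost_bad`), so the total error is in fact `O(1)`.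

The induction (`partial_step`) carries the quantity
`Elog ω - (N - S) ∑ x ∈ ω, log (1 + x₂)`, in which the interaction of the points placed so far with
the future ones is already accounted for.
-/


open scoped Real RealInnerProductSpace Classical

noncomputable section

/-- Points on the unit sphere `S² ⊂ ℝ³`. -/
abbrev Esp := EuclideanSpace ℝ (Fin 3)

/-- Logarithmic energy of a finite set of points: sum over ordered pairs of
distinct points of `log (1/‖x - y‖)`. -/
def Elog (ω : Finset Esp) : ℝ :=
  ∑ x ∈ ω, ∑ y ∈ ω, if x = y then 0 else Real.log (1 / ‖x - y‖)

/-- The constant `c_⋄` of the quasioptimal Diamond ensemble. -/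
def cdiamond : ℝ :=
  (19120 * Real.log 239 - 2270 * Real.log 227 - 1460 * Real.log 73
    - 265 * Real.log 53 - 1935 * Real.log 43 - 930 * Real.log 31
    - 1710 * Real.log 19 - 1938 * Real.log 17 + 19825 * Real.log 13
    + 1750 * Real.log 7 - 4250 * Real.log 5 - 131307 * Real.log 3
    + 56586 * Real.log 2 - 7170) / 14340

/-! ### Comparison of `cdiamond` with `1/2 - (log 3) / 2` -/

lemma log_sub_log_le {a b : ℝ} (ha : 0 < a) (hb : 0 < b) :
    Real.log a - Real.log b ≤ a / b - 1 := by
  rw [← Real.log_div ha.ne' hb.ne']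
  exact Real.log_le_sub_one_of_pos (by positivity)

lemma cdiamond_lower : 1 / 2 - Real.log 3 / 2 + 1 / 100000 ≤ cdiamond := by
  have h2 := Real.log_two_gt_d9
  have h2' := Real.log_two_lt_d9
  have h3 := Real.log_three_gt_d9
  have h3' := Real.log_three_lt_d9
  have h5 := Real.log_five_gt_d9
  have h5' := Real.log_five_lt_d9
  have key : ∀ a b : ℝ, 0 < a → 0 < b →
      Real.log a - Real.log b ≤ a / b - 1 ∧ Real.log b - Real.log a ≤ b / a - 1 :=
    fun a b ha hb => ⟨log_sub_log_le ha hb, log_sub_log_le hb ha⟩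
  -- each prime is compared with smaller ones through a pair of nearly equal smooth numbers
  have e7 := key (7 ^ 4) (2 ^ 5 * 3 * 5 ^ 2) (by norm_num) (by norm_num)
  have e13 := key (2 ^ 12) (3 ^ 2 * 5 * 7 * 13) (by norm_num) (by norm_num)
  have e17 := key (17 ^ 3) (2 * 3 ^ 3 * 7 * 13) (by norm_num) (by norm_num)
  have e19 := key (19 ^ 3) (2 ^ 2 * 5 * 7 ^ 3) (by norm_num) (by norm_num)
  have e31 := key (31 ^ 2) (2 ^ 6 * 3 * 5) (by norm_num) (by norm_num)
  have e43 := key (43 * 7) (2 ^ 2 * 3 * 5 ^ 2) (by norm_num) (by norm_num)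
  have e53 := key (53 * 17) (2 ^ 2 * 3 ^ 2 * 5 ^ 2) (by norm_num) (by norm_num)
  have e73 := key (73 * 5) (2 ^ 2 * 7 * 13) (by norm_num) (by norm_num)
  have e227 := key (227 * 3) (2 ^ 3 * 5 * 17) (by norm_num) (by norm_num)
  have e239 := key (239 ^ 2) (2 * 13 ^ 4) (by norm_num) (by norm_num)
  simp (disch := norm_num) only [Real.log_mul, Real.log_pow] at e7 e13 e17 e19 e31 e43 e53 e73 e227 e239
  norm_num at e7 e13 e17 e19 e31 e43 e53 e73 e227 e239
  unfold cdiamond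
  rw [le_div_iff₀ (by norm_num)]
  linarith [e7.1, e7.2, e13.1, e13.2, e17.1, e17.2, e19.1, e19.2, e31.1, e31.2, e43.1, e43.2,
    e53.1, e53.2, e73.1, e73.2, e227.1, e227.2, e239.1, e239.2]

lemma neg_one_le_cdiamond : -1 ≤ cdiamond := by
  have := cdiamond_lower
  have h3' := Real.log_three_lt_d9
  linarith

/-! ### The midpoint rule for `u log u` -/

lemma log_one_add_le_cubic {t : ℝ} (ht : -1 < t) :
    Real.log (1 + t) ≤ t - t ^ 2 / 2 + t ^ 3 / 3 := by
  set F : ℝ → ℝ := fun t => t - t ^ 2 / 2 + t ^ 3 / 3 - Real.log (1 + t) with hF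
  have hd : ∀ x : ℝ, -1 < x → HasDerivAt F (x ^ 3 / (1 + x)) x := by
    intro x hx
    have h1 : (1 + x) ≠ 0 := by linarith
    have := ((((hasDerivAt_id x).sub (((hasDerivAt_id x).pow 2).div_const 2)).add
      (((hasDerivAt_id x).pow 3).div_const 3))).sub (((hasDerivAt_id x).const_add 1).log h1)
    refine this.congr_deriv ?_
    simp only [id]
    field_simp
    ring
  have hF0 : F 0 = 0 := by simp [hF]
  suffices 0 ≤ F t by simp only [hF] at this; linarith
  rcases le_total 0 t with h | h
  · have : MonotoneOn F (Set.Icc 0 t) := by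
      apply monotoneOn_of_deriv_nonneg (convex_Icc _ _)
      · intro x hx
        exact (hd x (by linarith [hx.1])).continuousAt.continuousWithinAt
      · intro x hx
        rw [interior_Icc] at hx
        exact (hd x (by linarith [hx.1])).differentiableAt.differentiableWithinAt
      · intro x hx
        rw [interior_Icc] at hx
        rw [(hd x (by linarith [hx.1])).deriv]
        have := hx.1
        positivity
    rw [← hF0]
    exact this ⟨le_rfl, h⟩ ⟨h, le_rfl⟩ h
  · have : AntitoneOn F (Set.Icc t 0) := by
      apply antitoneOn_of_deriv_nonpos (convex_Icc _ _)
      · intro x hx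
        exact (hd x (by linarith [hx.1])).continuousAt.continuousWithinAt
      · intro x hx
        rw [interior_Icc] at hx
        exact (hd x (by linarith [hx.1])).differentiableAt.differentiableWithinAt
      · intro x hx
        rw [interior_Icc] at hx
        rw [(hd x (by linarith [hx.1])).deriv]
        have h1 : x ^ 3 ≤ 0 := Odd.pow_nonpos (by decide) hx.2.le
        exact div_nonpos_of_nonpos_of_nonneg h1 (by linarith [hx.1])
    rw [← hF0]
    exact this ⟨le_rfl, h⟩ ⟨h, le_rfl⟩ h

/-- An antiderivative of `u log u`. -/
def gfun (u : ℝ) : ℝ := u ^ 2 / 2 * Real.log u - u ^ 2 / 4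

lemma gfun_continuous : Continuous gfun := by
  have : gfun = fun u => u / 2 * (u * Real.log u) - u ^ 2 / 4 := by
    funext u; unfold gfun; ring
  rw [this]
  have := Real.continuous_mul_log
  fun_prop

lemma gfun_hasDerivAt {u : ℝ} (hu : u ≠ 0) : HasDerivAt gfun (u * Real.log u) u := by
  have := ((((hasDerivAt_id u).pow 2).div_const 2).mul ((hasDerivAt_id u).log hu)).sub
    (((hasDerivAt_id u).pow 2).div_const 4)
  refine this.congr_deriv ?_
  simp only [id, Pi.pow_apply]
  field_simp
  ring

/-- The error of the midpoint rule for the integral of `u log u` over `[p - d, p + d]`. -/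
def Dfun (p d : ℝ) : ℝ := gfun (p + d) - gfun (p - d) - 2 * d * (p * Real.log p)

/-- The bound on the `d`-derivative of `Dfun p d`, in terms of `d / p`. -/
lemma mul_log_symm_le {p d : ℝ} (hp : 0 < p) (hd : 0 ≤ d) (hdp : d < p) :
    (p + d) * Real.log (p + d) + (p - d) * Real.log (p - d) - 2 * (p * Real.log p)
      ≤ d ^ 2 / p + 2 * d ^ 4 / (3 * p ^ 3) := by
  obtain ⟨s, rfl⟩ : ∃ s, d = p * s := ⟨d / p, by field_simp⟩
  have hs0 : 0 ≤ s := by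
    by_contra h; push Not at h; nlinarith
  have hs1 : s < 1 := by
    by_contra h; push Not at h; nlinarith
  have h1 := log_one_add_le_cubic (t := s) (by linarith)
  have h2 := log_one_add_le_cubic (t := -s) (by linarith)
  have e1 : Real.log (p + p * s) = Real.log p + Real.log (1 + s) := by
    rw [← Real.log_mul hp.ne' (by linarith)]; ring_nf
  have e2 : Real.log (p - p * s) = Real.log p + Real.log (1 + -s) := by
    rw [← Real.log_mul hp.ne' (by linarith)]; ring_nf
  rw [e1, e2]
  have e3 : (p * s) ^ 2 / p + 2 * (p * s) ^ 4 / (3 * p ^ 3) = p * (s ^ 2 + 2 / 3 * s ^ 4) := by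
    field_simp
  rw [e3]
  have h3 : (1 + s) * Real.log (1 + s) + (1 - s) * Real.log (1 + -s) ≤ s ^ 2 + 2 / 3 * s ^ 4 := by
    have a1 := mul_le_mul_of_nonneg_left h1 (by linarith : 0 ≤ 1 + s)
    have a2 := mul_le_mul_of_nonneg_left h2 (by linarith : 0 ≤ 1 - s)
    nlinarith
  have := mul_le_mul_of_nonneg_left h3 hp.le
  nlinarith

lemma Dfun_le {p d : ℝ} (hp : 0 < p) (hd : 0 ≤ d) (hdp : d ≤ p) :
    Dfun p d ≤ d ^ 3 / (3 * p) + 2 * d ^ 5 / (15 * p ^ 3) := by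
  set F : ℝ → ℝ := fun d => d ^ 3 / (3 * p) + 2 * d ^ 5 / (15 * p ^ 3) - Dfun p d with hF
  have hF0 : F 0 = 0 := by simp [hF, Dfun]
  have hcont : Continuous F := by
    have := gfun_continuous
    simp only [hF, Dfun]
    fun_prop
  have hder : ∀ x : ℝ, 0 < x → x < p → HasDerivAt F (x ^ 2 / p + 2 * x ^ 4 / (3 * p ^ 3) -
      ((p + x) * Real.log (p + x) + (p - x) * Real.log (p - x) - 2 * (p * Real.log p))) x := by
    intro x h0 hx
    have g1 : HasDerivAt (fun x => gfun (p + x)) ((p + x) * Real.log (p + x) * 1) x :=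
      HasDerivAt.comp x (gfun_hasDerivAt (by linarith)) ((hasDerivAt_id x).const_add p)
    have g2 : HasDerivAt (fun x => gfun (p - x)) ((p - x) * Real.log (p - x) * (-1)) x :=
      HasDerivAt.comp x (gfun_hasDerivAt (by linarith)) ((hasDerivAt_id x).const_sub p)
    have g3 := ((((hasDerivAt_id x).pow 3).div_const (3 * p)).add
      ((((hasDerivAt_id x).pow 5).const_mul 2).div_const (15 * p ^ 3))).sub
      ((g1.sub g2).sub (((hasDerivAt_id x).const_mul 2).mul_const (p * Real.log p)))
    refine g3.congr_deriv ?_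
    simp only [id]
    field_simp
    ring
  have hm : MonotoneOn F (Set.Icc 0 p) := by
    apply monotoneOn_of_deriv_nonneg (convex_Icc _ _) hcont.continuousOn
    · intro x hx
      rw [interior_Icc] at hx
      exact (hder x hx.1 hx.2).differentiableAt.differentiableWithinAt
    · intro x hx
      rw [interior_Icc] at hx
      rw [(hder x hx.1 hx.2).deriv]
      linarith [mul_log_symm_le hp hx.1.le hx.2]
  have := hm ⟨le_rfl, hp.le⟩ ⟨hd, hdp⟩ hd
  rw [hF0] at this
  simp only [hF] at this
  linarith

lemma Dfun_le_sq {p d : ℝ} (hp : 0 < p) (hd : 0 ≤ d) (hdp : d ≤ p) : Dfun p d ≤ d ^ 2 := by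
  refine (Dfun_le hp hd hdp).trans ?_
  have h1 : d ^ 3 / (3 * p) ≤ d ^ 2 / 3 := by
    rw [div_le_div_iff₀ (by positivity) (by positivity)]
    nlinarith [mul_le_mul_of_nonneg_left hdp (sq_nonneg d)]
  have h2 : 2 * d ^ 5 / (15 * p ^ 3) ≤ 2 * d ^ 2 / 15 := by
    rw [div_le_div_iff₀ (by positivity) (by positivity)]
    have : d ^ 3 ≤ p ^ 3 := by gcongr
    nlinarith [mul_le_mul_of_nonneg_left this (sq_nonneg d)]
  nlinarith [sq_nonneg d]

/-! ### The cost of a band -/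

/-- The excess energy of a band of `r` points over the main terms `(1/2 - log 2) N²` and
`-(1/2) N log N`, where `N = p + q` and the bisecting parallel of the band has `p` points to its
north and `q` to its south, half of the band counting on each side. -/
def cost (p q r : ℝ) : ℝ :=
  Dfun p (r / 2) + Dfun q (r / 2) + r / 2 * Real.log (4 * p * q / ((p + q) * r ^ 2))

/-- A crude bound, used for the bands near the poles. -/
lemma cost_bad {p q r R K : ℝ} (hr : 1 ≤ r) (hrR : r ≤ R) (hp : r / 2 ≤ p) (hq : r / 2 ≤ q)
    (hK : p ≤ K ∨ q ≤ K) : cost p q r ≤ 2 * R ^ 2 + 2 * R * K := by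
  have hp0 : 0 < p := by linarith
  have hq0 : 0 < q := by linarith
  have d1 := Dfun_le_sq hp0 (by linarith : 0 ≤ r / 2) hp
  have d2 := Dfun_le_sq hq0 (by linarith : 0 ≤ r / 2) hq
  have hK0 : 0 < K := by rcases hK with h | h <;> linarith
  have hle : 4 * p * q / ((p + q) * r ^ 2) ≤ 4 * K := by
    rw [div_le_iff₀ (by positivity)]
    have h1 : p * q ≤ K * (p + q) := by
      rcases hK with h | h
      · nlinarith
      · nlinarith
    have h2 : (1:ℝ) ≤ r ^ 2 := by nlinarith
    have h3 : K * (p + q) * 1 ≤ K * (p + q) * r ^ 2 := by gcongr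
    nlinarith
  have hlog : Real.log (4 * p * q / ((p + q) * r ^ 2)) ≤ 4 * K := by
    have : 0 < 4 * p * q / ((p + q) * r ^ 2) := by positivity
    linarith [Real.log_le_sub_one_of_pos this]
  have h4 : r / 2 * Real.log (4 * p * q / ((p + q) * r ^ 2)) ≤ R / 2 * (4 * K) :=
    (mul_le_mul_of_nonneg_left hlog (by linarith)).trans
      (mul_le_mul_of_nonneg_right (by linarith) (by linarith))
  have h5 : (r / 2) ^ 2 ≤ R ^ 2 := by
    apply pow_le_pow_left₀ <;> linarith
  unfold cost
  linarith

/-- Conditions on `t`, the ratio of `r²` to its optimal value `12 p q / N`, under which a band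
costs at most `cdiamond` per point. -/
lemma cost_le_of_ratio {p q r t : ℝ} (hr : 0 < r) (hp : 2900000 ≤ p) (hq : 2900000 ≤ q)
    (hrp : r ^ 2 ≤ 13 * p) (hrq : r ^ 2 ≤ 13 * q)
    (ht : t = (p + q) * r ^ 2 / (12 * p * q)) (ht1 : t ≤ 1.002) (ht2 : 0.997 ≤ t) :
    cost p q r ≤ cdiamond * r := by
  have hp0 : 0 < p := by linarith
  have hq0 : 0 < q := by linarith
  have ht0 : 0 < t := by linarith
  have hrp' : r / 2 ≤ p := by
    by_contra h; push Not at h; nlinarith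
  have hrq' : r / 2 ≤ q := by
    by_contra h; push Not at h; nlinarith
  have hlog : Real.log (4 * p * q / ((p + q) * r ^ 2)) ≤ 1 / t - 1 - Real.log 3 := by
    have : 4 * p * q / ((p + q) * r ^ 2) = (1 / t) / 3 := by
      rw [ht]; field_simp; norm_num
    rw [this, Real.log_div (by positivity) (by norm_num)]
    linarith [Real.log_le_sub_one_of_pos (by positivity : 0 < 1 / t)]
  have d1 := Dfun_le hp0 (by linarith : 0 ≤ r / 2) hrp'
  have d2 := Dfun_le hq0 (by linarith : 0 ≤ r / 2) hrq'
  have e1 : (r / 2) ^ 3 / (3 * p) + (r / 2) ^ 3 / (3 * q) = r * (t / 2) := by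
    rw [ht]; field_simp; ring
  have small : ∀ x : ℝ, 2900000 ≤ x → r ^ 2 ≤ 13 * x →
      2 * (r / 2) ^ 5 / (15 * x ^ 3) ≤ r * (1 / 1000000) := by
    intro x hx hrx
    have hx0 : 0 < x := by linarith
    rw [div_le_iff₀ (by positivity)]
    have b1 : r ^ 2 * r ^ 2 ≤ (13 * x) * (13 * x) := by gcongr
    have b2 : 2 * (r / 2) ^ 5 = r * ((r ^ 2 * r ^ 2) / 16) := by ring
    rw [b2, mul_assoc]
    refine mul_le_mul_of_nonneg_left ?_ hr.le
    have b3 : x ^ 2 * 2900000 ≤ x ^ 2 * x := by gcongr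
    linarith [sq_nonneg x]
  have s1 := small p hp hrp
  have s2 := small q hq hrq
  have hlog' := mul_le_mul_of_nonneg_left hlog (by linarith : 0 ≤ r / 2)
  have ht3 : t / 2 + (1 / t - 1) / 2 ≤ 1 / 2 + 1 / 200000 := by
    have : 1 / t ≤ 2.00001 - t := by
      rw [div_le_iff₀ ht0]; nlinarith
    linarith
  have hc := mul_le_mul_of_nonneg_left cdiamond_lower hr.le
  have ht4 := mul_le_mul_of_nonneg_left ht3 hr.le
  unfold cost
  linarith

/-- If `r` is the integer part of `√(12 S M / N)`, the band is nearly optimal. -/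
lemma cost_good {S M r : ℝ} (hS : 3000000 ≤ S) (hM : 3000000 ≤ M) (hr : 1 ≤ r)
    (h1 : r ^ 2 * (S + M) ≤ 12 * S * M) (h2 : 12 * S * M ≤ (r + 1) ^ 2 * (S + M)) :
    cost (S + r / 2) (M - r / 2) r ≤ cdiamond * r := by
  have hS0 : 0 < S := by linarith
  have hM0 : 0 < M := by linarith
  have hrS : r ^ 2 ≤ 12 * S := by
    by_contra h; push Not at h
    nlinarith [mul_lt_mul_of_pos_right h (by linarith : 0 < S + M)]
  have hrM : r ^ 2 ≤ 12 * M := by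
    by_contra h; push Not at h
    nlinarith [mul_lt_mul_of_pos_right h (by linarith : 0 < S + M)]
  have hrS' : r / 2 ≤ S / 1000 := by
    by_contra h; push Not at h; nlinarith
  have hrM' : r / 2 ≤ M / 1000 := by
    by_contra h; push Not at h; nlinarith
  have hSM : 0 < S * M := by positivity
  have hrbig : 4000 ≤ r := by
    by_contra h; push Not at h
    have h3 : (r + 1) ^ 2 ≤ 4001 ^ 2 := by apply pow_le_pow_left₀ <;> linarith
    have h4 : (r + 1) ^ 2 * (S + M) ≤ 4001 ^ 2 * (S + M) := by gcongr
    have h5 : 3000000 * M ≤ S * M := by gcongr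
    have h6 : S * 3000000 ≤ S * M := by gcongr
    linarith
  have key : ∀ p q : ℝ, S ≤ p → p ≤ 1.001 * S → q ≤ M → 0.999 * M ≤ q → S + M = p + q →
      cost p q r ≤ cdiamond * r := by
    intro p q hpS hpS' hqM hqM' hN
    have hp0 : 0 < p := by linarith
    have hq0 : 0 < q := by linarith
    refine cost_le_of_ratio (by linarith) (by linarith) (by linarith) (by linarith) (by linarith)
      rfl ?_ ?_
    · rw [div_le_iff₀ (by positivity), ← hN]
      have : S * (0.999 * M) ≤ p * q := by gcongr
      linarith
    · rw [le_div_iff₀ (by positivity), ← hN]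
      have a1 : p * q ≤ (1.001 * S) * M := by gcongr
      have a2 : (r + 1) ^ 2 ≤ 1.001 * r ^ 2 := by nlinarith
      have a3 : (r + 1) ^ 2 * (S + M) ≤ 1.001 * r ^ 2 * (S + M) := by gcongr
      linarith
  exact key _ _ (by linarith) (by linarith) (by linarith) (by linarith) (by ring)

/-! ### Regular polygons on parallels -/

/-- The point of `ℝ³` at height `z` above the point `w` of the complex plane. -/
def pt (w : ℂ) (z : ℝ) : Esp := !₂[w.re, w.im, z]

@[simp] lemma pt_two (w : ℂ) (z : ℝ) : pt w z 2 = z := by simp [pt]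

lemma norm_sq_esp (x : Esp) : ‖x‖ ^ 2 = x 0 ^ 2 + x 1 ^ 2 + x 2 ^ 2 := by
  rw [EuclideanSpace.norm_sq_eq, Fin.sum_univ_three]
  simp

lemma norm_pt_sq (w : ℂ) (z : ℝ) : ‖pt w z‖ ^ 2 = ‖w‖ ^ 2 + z ^ 2 := by
  rw [norm_sq_esp, Complex.sq_norm, Complex.normSq_apply]
  simp [pt]
  ring

lemma pt_sub (w w' : ℂ) (z z' : ℝ) : pt w z - pt w' z' = pt (w - w') (z - z') := by
  ext i
  fin_cases i <;> simp [pt]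

lemma exists_eq_pt (x : Esp) : ∃ w : ℂ, x = pt w (x 2) := by
  refine ⟨⟨x 0, x 1⟩, ?_⟩
  ext i
  fin_cases i <;> simp [pt]

open Polynomial in
/-- Both sides are the modulus of the derivative of `X ^ r - 1` at `ξ`. -/
lemma prod_sub_roots {r : ℕ} (hr : 0 < r) {ξ : ℂ} (hξ : ξ ∈ nthRootsFinset r (1 : ℂ)) :
    ∏ η ∈ (nthRootsFinset r (1 : ℂ)).erase ξ, ‖ξ - η‖ = r := by
  have hprim := Complex.isPrimitiveRoot_exp r hr.ne'
  have h1 := X_pow_sub_one_eq_prod hr hprim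
  have h2 : Lagrange.nodal (nthRootsFinset r (1 : ℂ)) id = X ^ r - 1 := by
    rw [h1]; rfl
  have h3 := Lagrange.eval_nodal_derivative_eval_node_eq (v := (id : ℂ → ℂ)) hξ
  rw [h2, Lagrange.eval_nodal] at h3
  have h4 : ξ ^ r = 1 := by
    rwa [mem_nthRootsFinset hr] at hξ
  have h5 : ‖ξ‖ = 1 := Complex.norm_eq_one_of_pow_eq_one h4 hr.ne'
  have h6 := congrArg norm h3
  simp only [norm_prod, id] at h6
  rw [← h6]
  simp [derivative_X_pow, h5]

lemma sum_log_sub_roots {r : ℕ} (hr : 0 < r) {ξ : ℂ}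
    (hξ : ξ ∈ Polynomial.nthRootsFinset r (1 : ℂ)) :
    ∑ η ∈ (Polynomial.nthRootsFinset r (1 : ℂ)).erase ξ, Real.log ‖ξ - η‖ = Real.log r := by
  rw [← prod_sub_roots hr hξ, Real.log_prod]
  intro η hη
  rw [norm_ne_zero_iff, sub_ne_zero]
  exact (Finset.ne_of_mem_erase hη).symm

/-- The regular `r`-gon at height `z` with circumradius `‖c‖`, rotated by the argument of `c`. -/
def ngon (r : ℕ) (c : ℂ) (z : ℝ) : Finset Esp :=
  (Polynomial.nthRootsFinset r (1 : ℂ)).image (fun ξ => pt (c * ξ) z)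

lemma ngon_inj {c : ℂ} (hc : c ≠ 0) (z : ℝ) : Function.Injective (fun ξ => pt (c * ξ) z) := by
  intro a b hab
  have h : ‖pt (c * a) z - pt (c * b) z‖ ^ 2 = 0 := by
    simp only at hab
    rw [hab]; simp
  rw [pt_sub, norm_pt_sq, ← mul_sub, norm_mul] at h
  simp only [sub_self, ne_eq, OfNat.ofNat_ne_zero, not_false_eq_true, zero_pow, add_zero,
    pow_eq_zero_iff, mul_eq_zero, norm_eq_zero, hc, false_or] at h
  exact sub_eq_zero.1 h

lemma card_roots {r : ℕ} (hr : 0 < r) : (Polynomial.nthRootsFinset r (1 : ℂ)).card = r :=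
  (Complex.isPrimitiveRoot_exp r hr.ne').card_nthRootsFinset

lemma norm_root {r : ℕ} (hr : 0 < r) {ξ : ℂ} (hξ : ξ ∈ Polynomial.nthRootsFinset r (1 : ℂ)) :
    ‖ξ‖ = 1 := by
  rw [Polynomial.mem_nthRootsFinset hr] at hξ
  exact Complex.norm_eq_one_of_pow_eq_one hξ hr.ne'

lemma ngon_card {r : ℕ} (hr : 0 < r) {c : ℂ} (hc : c ≠ 0) (z : ℝ) : (ngon r c z).card = r := by
  rw [ngon, Finset.card_image_of_injective _ (ngon_inj hc z), card_roots hr]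

lemma ngon_norm {r : ℕ} (hr : 0 < r) {c : ℂ} {z : ℝ} (hc : ‖c‖ ^ 2 = 1 - z ^ 2) :
    ∀ x ∈ ngon r c z, ‖x‖ = 1 := by
  intro x hx
  simp only [ngon, Finset.mem_image] at hx
  obtain ⟨ξ, hξ, rfl⟩ := hx
  have : ‖pt (c * ξ) z‖ ^ 2 = 1 := by
    rw [norm_pt_sq, norm_mul, norm_root hr hξ, mul_one, hc]; ring
  exact (pow_eq_one_iff_of_nonneg (norm_nonneg _) two_ne_zero).1 this

lemma ngon_height {r : ℕ} {c : ℂ} {z : ℝ} : ∀ x ∈ ngon r c z, x 2 = z := by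
  intro x hx
  simp only [ngon, Finset.mem_image] at hx
  obtain ⟨ξ, hξ, rfl⟩ := hx
  simp

lemma ngon_sum {r : ℕ} {c : ℂ} (hc : c ≠ 0) (z : ℝ) (f : Esp → ℝ) :
    ∑ x ∈ ngon r c z, f x = ∑ ξ ∈ Polynomial.nthRootsFinset r (1 : ℂ), f (pt (c * ξ) z) := by
  rw [ngon, Finset.sum_image]
  exact fun a _ b _ h => ngon_inj hc z h

lemma Elog_ngon {r : ℕ} (hr : 0 < r) {c : ℂ} (hc : c ≠ 0) (z : ℝ) :
    Elog (ngon r c z) = - (r * Real.log r) - r * (r - 1) * Real.log ‖c‖ := by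
  unfold Elog
  rw [ngon_sum hc]
  have : ∀ ξ ∈ Polynomial.nthRootsFinset r (1 : ℂ),
      (∑ y ∈ ngon r c z, if pt (c * ξ) z = y then 0 else Real.log (1 / ‖pt (c * ξ) z - y‖))
        = - Real.log r - (r - 1) * Real.log ‖c‖ := by
    intro ξ hξ
    rw [ngon_sum hc, ← Finset.add_sum_erase _ _ hξ, if_pos rfl, zero_add]
    have h2 : ∀ η ∈ (Polynomial.nthRootsFinset r (1 : ℂ)).erase ξ,
        (if pt (c * ξ) z = pt (c * η) z then 0 else
          Real.log (1 / ‖pt (c * ξ) z - pt (c * η) z‖)) = - Real.log ‖ξ - η‖ - Real.log ‖c‖ := by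
      intro η hη
      have hne : ξ ≠ η := (Finset.ne_of_mem_erase hη).symm
      rw [if_neg (fun h => hne (ngon_inj hc z h)), pt_sub]
      have : ‖pt (c * ξ - c * η) (z - z)‖ = ‖c‖ * ‖ξ - η‖ := by
        have h := norm_pt_sq (c * ξ - c * η) (z - z)
        rw [← mul_sub, norm_mul] at h
        rw [← mul_sub]
        have h' : ‖pt (c * (ξ - η)) (z - z)‖ ^ 2 = (‖c‖ * ‖ξ - η‖) ^ 2 := by
          rw [h]; ring
        exact (pow_left_inj₀ (norm_nonneg _) (by positivity) two_ne_zero).1 h'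
      rw [this, one_div, Real.log_inv, Real.log_mul (norm_ne_zero_iff.2 hc)
        (norm_ne_zero_iff.2 (sub_ne_zero.2 hne))]
      ring
    rw [Finset.sum_congr rfl h2, Finset.sum_sub_distrib, Finset.sum_neg_distrib,
      sum_log_sub_roots hr hξ, Finset.sum_const, Finset.card_erase_of_mem hξ, card_roots hr,
      nsmul_eq_mul, Nat.cast_pred hr]
  rw [Finset.sum_congr rfl this, Finset.sum_const, card_roots hr, nsmul_eq_mul]
  ring

lemma Elog_union {A B : Finset Esp} (h : Disjoint A B) :
    Elog (A ∪ B) = Elog A + Elog B - 2 * ∑ x ∈ A, ∑ y ∈ B, Real.log ‖x - y‖ := by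
  unfold Elog
  have hne : ∀ x ∈ A, ∀ y ∈ B, x ≠ y := fun x hx y hy => Finset.disjoint_iff_ne.1 h x hx y hy
  rw [Finset.sum_union h]
  simp_rw [Finset.sum_union h, Finset.sum_add_distrib]
  have h1 : (∑ x ∈ A, ∑ y ∈ B, if x = y then 0 else Real.log (1 / ‖x - y‖))
      = - ∑ x ∈ A, ∑ y ∈ B, Real.log ‖x - y‖ := by
    rw [← Finset.sum_neg_distrib]
    refine Finset.sum_congr rfl fun x hx => ?_
    rw [← Finset.sum_neg_distrib]
    refine Finset.sum_congr rfl fun y hy => ?_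
    rw [if_neg (hne x hx y hy), one_div, Real.log_inv]
  have h2 : (∑ y ∈ B, ∑ x ∈ A, if y = x then 0 else Real.log (1 / ‖y - x‖))
      = - ∑ x ∈ A, ∑ y ∈ B, Real.log ‖x - y‖ := by
    rw [Finset.sum_comm, ← h1]
    refine Finset.sum_congr rfl fun x hx => Finset.sum_congr rfl fun y hy => ?_
    rw [if_neg (hne x hx y hy), if_neg (hne x hx y hy).symm, norm_sub_rev]
  rw [h1, h2]
  ring

/-! ### Averaging over rotations -/

/-- With `a² = (1 + zx) (1 - z)`, the distance from a fixed point of the sphere to a point moving on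
the parallel at height `z` is the modulus of an affine function of the rotation `v`. -/
lemma dist_circle {wx c v : ℂ} {zx z a : ℝ} (hx : ‖wx‖ ^ 2 = 1 - zx ^ 2) (hc : ‖c‖ ^ 2 = 1 - z ^ 2)
    (hv : ‖v‖ = 1) (ha : 0 < a) (ha2 : a ^ 2 = (1 + zx) * (1 - z)) :
    ‖pt wx zx - pt (c * v) z‖ = ‖(a : ℂ) - starRingEnd ℂ wx * c / a * v‖ := by
  refine (pow_left_inj₀ (norm_nonneg _) (norm_nonneg _) two_ne_zero).1 ?_
  rw [pt_sub, norm_pt_sq]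
  have hv' : Complex.normSq v = 1 := by rw [← Complex.sq_norm, hv]; norm_num
  rw [Complex.sq_norm, Complex.sq_norm, Complex.normSq_sub, Complex.normSq_sub]
  rw [Complex.sq_norm] at hx hc
  have h1 : ((a : ℂ) * starRingEnd ℂ (starRingEnd ℂ wx * c / a * v)) =
      wx * starRingEnd ℂ (c * v) := by
    have : (a : ℂ) ≠ 0 := by exact_mod_cast ha.ne'
    simp only [map_mul, map_div₀, Complex.conj_conj, Complex.conj_ofReal]
    field_simp
  rw [h1]
  simp only [Complex.normSq_mul, Complex.normSq_div, Complex.normSq_conj, Complex.normSq_ofReal,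
    hv', hx, hc, mul_one]
  have h2 : a * a = (1 + zx) * (1 - z) := by rw [← ha2]; ring
  have h3 : (1 - zx ^ 2) * (1 - z ^ 2) / (a * a) = (1 - zx) * (1 + z) := by
    rw [div_eq_iff (by positivity), h2]; ring
  rw [h3, h2]
  ring

/-- The affine function of `dist_circle` has no zero in the closed unit disc when `z < zx`, so the
mean value property evaluates the average of the logarithm of the distance. -/
lemma circleAverage_log_dist {wx c : ℂ} {zx z : ℝ} (hx : ‖wx‖ ^ 2 = 1 - zx ^ 2)
    (hc : ‖c‖ ^ 2 = 1 - z ^ 2) (hz : -1 < z) (hzx : z < zx) (hzx1 : zx ≤ 1) :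
    ContinuousOn (fun u : ℂ => Real.log ‖pt wx zx - pt (c * u) z‖) (Metric.sphere 0 1) ∧
    Real.circleAverage (fun u : ℂ => Real.log ‖pt wx zx - pt (c * u) z‖) 0 1
      = (Real.log (1 + zx) + Real.log (1 - z)) / 2 := by
  have hpos : 0 < (1 + zx) * (1 - z) := mul_pos (by linarith) (by linarith)
  set a := Real.sqrt ((1 + zx) * (1 - z)) with ha
  have ha0 : 0 < a := Real.sqrt_pos.2 hpos
  have ha2 : a ^ 2 = (1 + zx) * (1 - z) := Real.sq_sqrt hpos.le
  set β : ℂ := starRingEnd ℂ wx * c / a with hβ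
  have hβlt : ‖β‖ < a := by
    have h1 : ‖β‖ ^ 2 = (1 - zx) * (1 + z) := by
      rw [hβ, norm_div, norm_mul, RCLike.norm_conj, Complex.norm_real, Real.norm_eq_abs, div_pow,
        mul_pow, hx, hc, sq_abs, ha2, div_eq_iff hpos.ne']
      ring
    refine lt_of_pow_lt_pow_left₀ 2 ha0.le ?_
    rw [h1, ha2]
    nlinarith
  have hne : ∀ u ∈ Metric.closedBall (0 : ℂ) |1|, (a : ℂ) - β * u ≠ 0 := by
    intro u hu h
    rw [abs_one, mem_closedBall_zero_iff] at hu
    have h2 : ‖(a : ℂ)‖ = ‖β‖ * ‖u‖ := by rw [sub_eq_zero.1 h, norm_mul]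
    rw [Complex.norm_real, Real.norm_eq_abs, abs_of_pos ha0] at h2
    nlinarith [norm_nonneg β, norm_nonneg u]
  have heq : Set.EqOn (fun u : ℂ => Real.log ‖pt wx zx - pt (c * u) z‖)
      (fun u : ℂ => Real.log ‖(a : ℂ) - β * u‖) (Metric.sphere 0 1) := by
    intro u hu
    simp only
    rw [dist_circle hx hc (by simpa using hu) ha0 ha2]
  constructor
  · refine ContinuousOn.congr ?_ heq
    refine ContinuousOn.log (by fun_prop) ?_
    intro u hu
    exact norm_ne_zero_iff.2 (hne u (by rw [abs_one]; exact Metric.sphere_subset_closedBall hu))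
  · rw [Real.circleAverage_congr_sphere (by rwa [abs_one]),
      AnalyticOnNhd.circleAverage_log_norm_of_ne_zero (g := fun u => (a : ℂ) - β * u) _ hne]
    · rw [mul_zero, sub_zero, Complex.norm_real, Real.norm_eq_abs, abs_of_pos ha0, ha,
        Real.log_sqrt hpos.le, Real.log_mul (by linarith) (by linarith)]
    · intro u _
      fun_prop

/-- Some rotation of the `r`-gon at height `z` interacts with `ω` at most as much as the average over
all rotations does. -/
lemma exists_rotation (ω : Finset Esp) {r : ℕ} (hr : 0 < r) {z : ℝ} (hz : -1 < z) (hz1 : z < 1)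
    (hω : ∀ x ∈ ω, ‖x‖ = 1) (hωz : ∀ x ∈ ω, z < x 2) :
    ∃ c : ℂ, ‖c‖ ^ 2 = 1 - z ^ 2 ∧
      r * ∑ x ∈ ω, (Real.log (1 + x 2) + Real.log (1 - z)) / 2 ≤
        ∑ x ∈ ω, ∑ y ∈ ngon r c z, Real.log ‖x - y‖ := by
  set ρ := Real.sqrt (1 - z ^ 2) with hρ
  have hpos : 0 < 1 - z ^ 2 := by nlinarith
  have hρ2 : ρ ^ 2 = 1 - z ^ 2 := Real.sq_sqrt hpos.le
  have hρ0 : 0 < ρ := Real.sqrt_pos.2 hpos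
  set I := ω ×ˢ Polynomial.nthRootsFinset r (1 : ℂ) with hI
  set g : Esp × ℂ → ℂ → ℝ := fun i u => Real.log ‖i.1 - pt (ρ * i.2 * u) z‖ with hg
  have hgi : ∀ i ∈ I, ContinuousOn (g i) (Metric.sphere 0 1) ∧
      Real.circleAverage (g i) 0 1 = (Real.log (1 + i.1 2) + Real.log (1 - z)) / 2 := by
    intro i hi
    obtain ⟨hx, hξ⟩ := Finset.mem_product.1 hi
    obtain ⟨w, hw⟩ := exists_eq_pt i.1
    have h1 := norm_pt_sq w (i.1 2)
    rw [← hw, hω _ hx] at h1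
    have h2 : ‖(ρ : ℂ) * i.2‖ ^ 2 = 1 - z ^ 2 := by
      rw [norm_mul, norm_root hr hξ, mul_one, Complex.norm_real, Real.norm_eq_abs, sq_abs, hρ2]
    have h3 := circleAverage_log_dist (wx := w) (zx := i.1 2) (by linarith) h2 hz (hωz _ hx)
      (by nlinarith [sq_nonneg ‖w‖])
    rw [← hw] at h3
    exact h3
  set F : ℂ → ℝ := fun u => ∑ i ∈ I, g i u with hF
  have hFc : ContinuousOn F (Metric.sphere 0 1) :=
    continuousOn_finsetSum _ fun i hi => (hgi i hi).1
  have hint : ∀ f : ℂ → ℝ, ContinuousOn f (Metric.sphere 0 1) → CircleIntegrable f 0 1 :=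
    fun f hf => hf.circleIntegrable zero_le_one
  obtain ⟨u, hu, hmax⟩ := (isCompact_sphere (0 : ℂ) 1).exists_isMaxOn
    ⟨1, by simp⟩ hFc
  have havg : Real.circleAverage F 0 1 ≤ F u :=
    Real.circleAverage_mono_on_of_le_circle (hint F hFc) (by rw [abs_one]; exact fun x hx => hmax hx)
  have havg' : Real.circleAverage F 0 1
      = ∑ i ∈ I, (Real.log (1 + i.1 2) + Real.log (1 - z)) / 2 := by
    rw [hF, Real.circleAverage_fun_sum (fun i hi => hint _ (hgi i hi).1)]
    exact Finset.sum_congr rfl fun i hi => (hgi i hi).2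
  have hu1 : ‖u‖ = 1 := by simpa using hu
  have hc2 : ‖(ρ : ℂ) * u‖ ^ 2 = 1 - z ^ 2 := by
    rw [norm_mul, hu1, mul_one, Complex.norm_real, Real.norm_eq_abs, sq_abs, hρ2]
  have hc0 : (ρ : ℂ) * u ≠ 0 := by
    intro h; rw [h] at hc2; simp at hc2; linarith
  refine ⟨ρ * u, hc2, ?_⟩
  have e1 : ∑ i ∈ I, (Real.log (1 + i.1 2) + Real.log (1 - z)) / 2
      = r * ∑ x ∈ ω, (Real.log (1 + x 2) + Real.log (1 - z)) / 2 := by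
    rw [hI, Finset.sum_product, Finset.mul_sum]
    refine Finset.sum_congr rfl fun x _ => ?_
    simp only [Finset.sum_const, card_roots hr, nsmul_eq_mul]
  have e2 : F u = ∑ x ∈ ω, ∑ y ∈ ngon r (ρ * u) z, Real.log ‖x - y‖ := by
    rw [hF, hI]
    simp only [hg]
    rw [Finset.sum_product]
    refine Finset.sum_congr rfl fun x _ => ?_
    rw [ngon_sum hc0]
    refine Finset.sum_congr rfl fun ξ _ => ?_
    rw [mul_right_comm]
  rw [← e1, ← havg', ← e2]
  exact havg

/-! ### Placing the bands one after the other -/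

/-- The number of polar bands still to come after `S` points out of `N` have been placed is at most
this quantity. -/
def polar (N S : ℕ) : ℕ := (3000000 - S) + min (N - S) 3000000

/-- A bound for the cost of one polar band, together with the term `-cdiamond * r`: such a band has
at most `36000000` points, and at most `39000000` points on one side of its parallel. -/
def polarCost : ℝ := 2 * 36000000 ^ 2 + 2 * 36000000 * 39000000 + 36000000

/-- The number of points of the next band: the integer part of `√(12 S (N - S) / N)`, forced to lie
between `1` and `N - S`. The polar count drops whenever `cost_good` does not apply. -/
lemma exists_band {N S : ℕ} (hS : S < N) : ∃ r : ℕ, 1 ≤ r ∧ S + r ≤ N ∧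
    cost (S + r / 2 : ℝ) ((N - S : ℝ) - r / 2) r ≤
      cdiamond * r + polarCost * ((polar N S : ℝ) - polar N (S + r)) := by
  obtain ⟨M, rfl⟩ : ∃ M, N = S + M := ⟨N - S, by omega⟩
  have hM : 0 < M := by omega
  have hNpos : 0 < S + M := by omega
  set T := 12 * S * M / (S + M) with hT
  have hTN : T * (S + M) ≤ 12 * S * M := Nat.div_mul_le_self _ _
  have hTN' : 12 * S * M < (T + 1) * (S + M) := by
    rw [← Nat.div_lt_iff_lt_mul hNpos]; omega
  have hTM : T ≤ 12 * M := by
    by_contra h; push Not at h; nlinarith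
  have hTS : T ≤ 12 * S := by
    by_contra h; push Not at h; nlinarith
  have hs1 : Nat.sqrt T * Nat.sqrt T ≤ T := Nat.sqrt_le T
  have hs2 : T < (Nat.sqrt T + 1) * (Nat.sqrt T + 1) := Nat.lt_succ_sqrt T
  by_cases hgood : 3000000 ≤ S ∧ 3000000 < M
  · obtain ⟨hS1, hM1⟩ := hgood
    refine ⟨Nat.sqrt T, ?_, ?_, ?_⟩
    · by_contra h
      have h0 : Nat.sqrt T = 0 := by omega
      rw [h0] at hs2
      have hT0 : T = 0 := by omega
      rw [hT0] at hTN'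
      nlinarith
    · by_contra h
      push Not at h
      have : M ≤ Nat.sqrt T := by omega
      nlinarith
    · have h1 : (Nat.sqrt T * Nat.sqrt T) * (S + M) ≤ 12 * S * M :=
        (Nat.mul_le_mul_right _ hs1).trans hTN
      have h2 : 12 * S * M ≤ ((Nat.sqrt T + 1) * (Nat.sqrt T + 1)) * (S + M) :=
        hTN'.le.trans (Nat.mul_le_mul_right _ hs2)
      have hpos : 1 ≤ Nat.sqrt T := by
        by_contra h
        have h0 : Nat.sqrt T = 0 := by omega
        rw [h0] at h2
        nlinarith
      have hmono : polar (S + M) (S + Nat.sqrt T) ≤ polar (S + M) S := by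
        unfold polar; omega
      have hmono' : (polar (S + M) (S + Nat.sqrt T) : ℝ) ≤ polar (S + M) S := by
        exact_mod_cast hmono
      have h1' : ((Nat.sqrt T : ℝ)) ^ 2 * (S + M) ≤ 12 * S * M := by
        rw [sq]; exact_mod_cast h1
      have h2' : (12 : ℝ) * S * M ≤ ((Nat.sqrt T : ℝ) + 1) ^ 2 * (S + M) := by
        rw [sq]; exact_mod_cast h2
      have := cost_good (S := S) (M := M) (r := Nat.sqrt T) (by exact_mod_cast hS1)
        (by exact_mod_cast hM1.le) (by exact_mod_cast hpos) h1' h2'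
      have e : (((S + M : ℕ) : ℝ) - S) = M := by push_cast; ring
      rw [e]
      have hC : 0 ≤ polarCost := by unfold polarCost; norm_num
      have := mul_nonneg hC (sub_nonneg.2 hmono')
      linarith
  · have hsT : Nat.sqrt T ≤ T := Nat.sqrt_le_self T
    obtain ⟨r, hr⟩ : ∃ r, r = min M (max 1 (Nat.sqrt T)) := ⟨_, rfl⟩
    have hr1 : 1 ≤ r := by omega
    have hrM : r ≤ M := by omega
    have hrR : r ≤ 36000000 := by omega
    refine ⟨r, hr1, by omega, ?_⟩
    have hdec : polar (S + M) (S + r) + 1 ≤ polar (S + M) S := by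
      unfold polar; omega
    have hdec' : (polar (S + M) (S + r) : ℝ) + 1 ≤ polar (S + M) S := by exact_mod_cast hdec
    have e : (((S + M : ℕ) : ℝ) - S) = M := by push_cast; ring
    rw [e]
    have hr1' : (1 : ℝ) ≤ r := by exact_mod_cast hr1
    have hrM' : (r : ℝ) ≤ M := by exact_mod_cast hrM
    have hrR' : (r : ℝ) ≤ 36000000 := by exact_mod_cast hrR
    have hS0 : (0 : ℝ) ≤ S := by positivity
    have hK : (S + r / 2 : ℝ) ≤ 39000000 ∨ (M - r / 2 : ℝ) ≤ 39000000 := by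
      by_cases h : 3000000 ≤ S
      · right
        have : M ≤ 3000000 := by omega
        have : (M : ℝ) ≤ 3000000 := by exact_mod_cast this
        linarith
      · left
        have : S ≤ 3000000 := by omega
        have : (S : ℝ) ≤ 3000000 := by exact_mod_cast this
        linarith
    have hb := cost_bad hr1' hrR' (by linarith : (r : ℝ) / 2 ≤ S + r / 2)
      (by linarith : (r : ℝ) / 2 ≤ M - r / 2) hK
    have hC : 0 ≤ polarCost := by unfold polarCost; norm_num
    have h3 : polarCost * 1 ≤ polarCost * ((polar (S + M) S : ℝ) - polar (S + M) (S + r)) :=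
      mul_le_mul_of_nonneg_left (by linarith) hC
    have h4 : -1 * (r : ℝ) ≤ cdiamond * r :=
      mul_le_mul_of_nonneg_right neg_one_le_cdiamond (by linarith)
    unfold polarCost at h3 ⊢
    linarith

/-- The bound carried along the construction when `S` of the `N` points have been placed. -/
def bound (N S : ℕ) : ℝ :=
  -(gfun S - gfun (N - S) + gfun N) - N * S * Real.log (2 / N) - S / 2 * Real.log N
    + cdiamond * S + polarCost * ((polar N 0 : ℝ) - polar N S)

/-- A partial configuration: `S` of the `N` points fill the polar cap of relative area `S / N`, and
their energy, together with their interaction with the `N - S` points still to be placed further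
south, obeys the bound. -/
def Partial (N S : ℕ) : Prop :=
  ∃ ω : Finset Esp, ω.card = S ∧ (∀ x ∈ ω, ‖x‖ = 1) ∧ (∀ x ∈ ω, 1 - 2 * (S : ℝ) / N < x 2) ∧
    Elog ω - (N - S) * ∑ x ∈ ω, Real.log (1 + x 2) ≤ bound N S

lemma partial_zero (N : ℕ) : Partial N 0 := by
  refine ⟨∅, by simp, by simp, by simp, ?_⟩
  simp [Elog, bound, gfun]

/-- A partial configuration can be extended by one band. -/
lemma partial_step {N S : ℕ} (hS : S < N) (h : Partial N S) :
    ∃ r : ℕ, 1 ≤ r ∧ S + r ≤ N ∧ Partial N (S + r) := by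
  obtain ⟨ω, hcard, hnorm, hheight, hE⟩ := h
  obtain ⟨r, hr1, hrN, hcost⟩ := exists_band hS
  refine ⟨r, hr1, hrN, ?_⟩
  have hN : (0 : ℝ) < N := by exact_mod_cast (by omega : 0 < N)
  have hr1' : (1 : ℝ) ≤ r := by exact_mod_cast hr1
  have hrN' : (S : ℝ) + r ≤ N := by exact_mod_cast hrN
  have hS0 : (0 : ℝ) ≤ S := by positivity
  obtain ⟨p, hp⟩ : ∃ p : ℝ, p = S + r / 2 := ⟨_, rfl⟩
  obtain ⟨q, hq⟩ : ∃ q : ℝ, q = (N - S : ℝ) - r / 2 := ⟨_, rfl⟩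
  have hp0 : 0 < p := by linarith
  have hq0 : 0 < q := by linarith
  have hpq : p + q = N := by rw [hp, hq]; ring
  -- the height bisecting the area of the band
  obtain ⟨z, hz⟩ : ∃ z : ℝ, z = 1 - 2 * p / N := ⟨_, rfl⟩
  have h1mz : 1 - z = p * (2 / N) := by rw [hz]; ring
  have h1pz : 1 + z = q * (2 / N) := by
    rw [hz, ← hpq]; field_simp; ring
  have hzm : -1 < z := by
    have : 0 < 1 + z := by rw [h1pz]; positivity
    linarith
  have hzp : z < 1 := by
    have : 0 < 1 - z := by rw [h1mz]; positivity
    linarith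
  have hz1 : z < 1 - 2 * (S : ℝ) / N := by
    rw [hz]
    gcongr
    linarith
  have hz2 : 1 - 2 * ((S + r : ℕ) : ℝ) / N < z := by
    rw [hz]
    gcongr
    push_cast
    linarith
  have hωz : ∀ x ∈ ω, z < x 2 := fun x hx => hz1.trans (hheight x hx)
  obtain ⟨c, hc, hX⟩ := exists_rotation ω hr1 hzm hzp hnorm hωz
  have hc2 : 0 < ‖c‖ ^ 2 := by rw [hc]; nlinarith
  have hc0 : c ≠ 0 := by rintro rfl; simp at hc2
  have hdisj : Disjoint ω (ngon r c z) := by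
    rw [Finset.disjoint_left]
    intro x hx hx'
    have := hωz x hx
    rw [ngon_height x hx'] at this
    exact lt_irrefl _ this
  refine ⟨ω ∪ ngon r c z, ?_, ?_, ?_, ?_⟩
  · rw [Finset.card_union_of_disjoint hdisj, hcard, ngon_card hr1 hc0]
  · intro x hx
    rcases Finset.mem_union.1 hx with hx | hx
    · exact hnorm x hx
    · exact ngon_norm hr1 hc x hx
  · intro x hx
    rcases Finset.mem_union.1 hx with hx | hx
    · exact hz2.trans (hωz x hx)
    · rw [ngon_height x hx]; exact hz2
  · rw [Elog_union hdisj, Elog_ngon hr1 hc0, Finset.sum_union hdisj]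
    have e1 : ∑ x ∈ ngon r c z, Real.log (1 + x 2) = r * Real.log (1 + z) := by
      rw [Finset.sum_congr rfl (fun x hx => by rw [ngon_height x hx]), Finset.sum_const,
        ngon_card hr1 hc0, nsmul_eq_mul]
    have e2 : ∑ x ∈ ω, (Real.log (1 + x 2) + Real.log (1 - z)) / 2
        = (∑ x ∈ ω, Real.log (1 + x 2) + S * Real.log (1 - z)) / 2 := by
      rw [← Finset.sum_div, Finset.sum_add_distrib, Finset.sum_const, hcard, nsmul_eq_mul]
    have e3 : Real.log (1 - z) = Real.log p + Real.log (2 / N) := by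
      rw [h1mz, Real.log_mul hp0.ne' (by positivity)]
    have e4 : Real.log (1 + z) = Real.log q + Real.log (2 / N) := by
      rw [h1pz, Real.log_mul hq0.ne' (by positivity)]
    have e5 : Real.log ‖c‖ = (Real.log (1 + z) + Real.log (1 - z)) / 2 := by
      rw [← Real.log_mul (by linarith) (by linarith), show (1 + z) * (1 - z) = ‖c‖ ^ 2 by
        rw [hc]; ring, Real.log_pow]
      push_cast; ring
    have e6 : Real.log (4 * p * q / ((p + q) * (r : ℝ) ^ 2))
        = Real.log p + Real.log q + 2 * Real.log (2 / N) + Real.log N - 2 * Real.log r := by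
      have : 4 * p * q / ((p + q) * (r : ℝ) ^ 2) = p * q * (2 / N) ^ 2 * N / r ^ 2 := by
        rw [hpq]; field_simp; norm_num
      rw [this, Real.log_div (by positivity) (by positivity), Real.log_mul (by positivity)
        (by positivity), Real.log_mul (by positivity) (by positivity),
        Real.log_mul (by positivity) (by positivity), Real.log_pow, Real.log_pow]
      push_cast; ring
    rw [← hp, ← hq] at hcost
    unfold cost Dfun at hcost
    rw [e6, show p + (r : ℝ) / 2 = S + r by rw [hp]; ring, show p - (r : ℝ) / 2 = S by rw [hp]; ring,
      show q + (r : ℝ) / 2 = N - S by rw [hq]; ring,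
      show q - (r : ℝ) / 2 = N - (S + r) by rw [hq]; ring] at hcost
    rw [e2, e3] at hX
    rw [e1, e5, e3, e4]
    unfold bound at hE ⊢
    push_cast
    generalize Real.log p = a at *
    generalize Real.log q = b at *
    generalize Real.log (2 / N) = L at *
    subst hp hq
    linarith

lemma partial_full (N : ℕ) : Partial N N := by
  have key : ∀ m S : ℕ, S + m = N → Partial N S → Partial N N := by
    intro m
    induction m using Nat.strong_induction_on with
    | _ m ih =>
      intro S hSm hP
      rcases Nat.eq_zero_or_pos m with h0 | h0
      · have : S = N := by omega
        rwa [this] at hP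
      · obtain ⟨r, hr1, hrN, hP'⟩ := partial_step (by omega : S < N) hP
        exact ih (m - r) (by omega) (S + r) (by omega) hP'
  exact key N 0 (by omega) (partial_zero N)

/-- There is a constant `Λ > 0` such that for every `N ≥ 2` there is a set of `N`
distinct points on the unit sphere whose logarithmic energy is at most
`(1/2 - log 2) N² - (1/2) N log N + c_⋄ N + Λ √N log N`. -/
theorem low_energy_points_on_sphere :
    ∃ Λ : ℝ, 0 < Λ ∧ ∀ N : ℕ, 2 ≤ N → ∃ ω : Finset Esp,
      ω.card = N ∧ (∀ x ∈ ω, ‖x‖ = 1) ∧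
      Elog ω ≤ (1/2 - Real.log 2) * (N:ℝ)^2 - (1/2) * N * Real.log N
        + cdiamond * N + Λ * Real.sqrt N * Real.log N := by
  have hC : 0 < polarCost := by unfold polarCost; norm_num
  have hlog2 : 0 < Real.log 2 := Real.log_pos one_lt_two
  refine ⟨polarCost * 6000000 / Real.log 2, by positivity, fun N hN => ?_⟩
  obtain ⟨ω, hcard, hnorm, -, hE⟩ := partial_full N
  refine ⟨ω, hcard, hnorm, ?_⟩
  have hN2 : (2 : ℝ) ≤ N := by exact_mod_cast hN
  have hN0 : (0 : ℝ) < N := by linarith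
  have hsqrt : 1 ≤ Real.sqrt N := by
    rw [Real.one_le_sqrt]; linarith
  have hlogN : Real.log 2 ≤ Real.log N := Real.log_le_log two_pos hN2
  have hpol : (polar N 0 : ℝ) ≤ 6000000 := by
    have : polar N 0 ≤ 6000000 := by unfold polar; omega
    exact_mod_cast this
  have hpol' : (0 : ℝ) ≤ polar N N := by positivity
  have h1 : polarCost * ((polar N 0 : ℝ) - polar N N) ≤ polarCost * 6000000 :=
    mul_le_mul_of_nonneg_left (by linarith) hC.le
  have h2 : polarCost * 6000000 ≤
      polarCost * 6000000 / Real.log 2 * Real.sqrt N * Real.log N := by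
    have h3 : 1 * Real.log 2 ≤ Real.sqrt N * Real.log N :=
      mul_le_mul hsqrt hlogN hlog2.le (by linarith)
    calc polarCost * 6000000 = polarCost * 6000000 / Real.log 2 * (1 * Real.log 2) := by
          field_simp
      _ ≤ polarCost * 6000000 / Real.log 2 * (Real.sqrt N * Real.log N) :=
          mul_le_mul_of_nonneg_left h3 (by positivity)
      _ = _ := by ring
  have h4 : Real.log (2 / N) = Real.log 2 - Real.log N := Real.log_div two_ne_zero hN0.ne'
  rw [sub_self, zero_mul, sub_zero] at hE
  unfold bound at hE
  rw [sub_self, h4] at hE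
  have h5 : gfun 0 = 0 := by simp [gfun]
  rw [h5] at hE
  unfold gfun at hE
  linarith
end
end

section
/- There exist universal constants c₁, c₂ > 0 such that for every integer N ≥ 1 there is a set ω_N of N distinct points on the unit sphere S² whose spherical cap discrepancy satisfies c₁/√N ≤ D_{sup,cap}(ω_N) ≤ c₂/√N. -/
/-!
The points lie on horizontal rings: about `√N` rings, equally spaced in height, each carrying
`M = ⌊√N⌋` equally spaced points. In the coordinates (height, azimuth) the surface measure of the
sphere is Lebesgue measure, and the points form a product lattice.

Upper bound: a cap meets each ring in an arc, and equally spaced points count an arc up to a bounded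
number of points (`ring_count`); over the `O(√N)` rings this costs `O(√N)` points. It remains to
compare the sum of the arc lengths over the rings with the area of the cap. For a fixed azimuth the
cap meets the meridian in an interval or the complement of one, so the heights of the rings count its
length up to a bounded number of slabs (`meridian`); integrating over the azimuth (`averaged`) gives
the comparison with an error of `O(√N)` points. The area `(1 - t) / 2` of a cap is computed in these
coordinates (`area`): the arc at height `h` is the integral over `τ > t` of `1 / √Q(h, τ)`, by the
substitution `τ = ⟨z, y⟩`. Here `Q` is a Gram determinant symmetric in `h` and `τ`, so after
exchanging the integrals the inner one is the constant `π`.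

Lower bound: the lowest ring carries `⌊√N⌋` points and is contained in a cap of area less than `1 / N`
(`lower`).
-/

open scoped Real RealInnerProductSpace Classical

noncomputable section

/-- The spherical cap discrepancy of a finite set of points on `S²`:
`sup` over all caps `C(z,t) = {y : ⟨z,y⟩ > t}` (with `z ∈ S²`, `t ∈ [-1,1]`) of
`|#(ω ∩ C(z,t))/N - (1-t)/2|`, where `(1-t)/2` is the normalized surface measure
of the cap. -/
def capDiscrepancy (ω : Finset Esp) : ℝ :=
  ⨆ z : {z : Esp // ‖z‖ = 1}, ⨆ t : Set.Icc (-1 : ℝ) 1,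
    |((ω.filter fun y => (t : ℝ) < ⟪(z : Esp), y⟫).card : ℝ) / ω.card
      - (1 - (t : ℝ)) / 2|

open MeasureTheory Set

/-! ### Counting one point per cell -/

/-- Points `p j`, one in each of `n` consecutive cells of length `δ`, count the length of an
interval `U` up to `2 * δ`: a cell contained in `U` or disjoint from `U` contributes no error,
and at most two cells are neither. -/
lemma count_error (U : Set ℝ) (x₀ δ : ℝ) (n : ℕ) (p : ℕ → ℝ) (hδ : 0 < δ) (hUm : MeasurableSet U)
    (hU : (U ∩ Icc x₀ (x₀ + n * δ)).OrdConnected)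
    (hp : ∀ j < n, p j ∈ Icc (x₀ + j * δ) (x₀ + (j + 1) * δ)) :
    |δ * ∑ j ∈ Finset.range n, U.indicator (1 : ℝ → ℝ) (p j)
      - volume.real (U ∩ Ico x₀ (x₀ + n * δ))| ≤ 2 * δ := by
  classical
  have hsplit : ∀ m : ℕ, volume.real (U ∩ Ico x₀ (x₀ + m * δ)) =
      ∑ j ∈ Finset.range m, volume.real (U ∩ Ico (x₀ + j * δ) (x₀ + (j + 1) * δ)) := by
    intro m
    induction m with
    | zero => simp
    | succ m ih =>
      rw [Finset.sum_range_succ, ← ih, ← measureReal_union _ (hUm.inter measurableSet_Ico)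
        (measure_ne_top_of_subset inter_subset_right measure_Ico_lt_top.ne)
        (measure_ne_top_of_subset inter_subset_right measure_Ico_lt_top.ne), ← inter_union_distrib_left,
        Ico_union_Ico_eq_Ico]
      · push_cast; rfl
      · nlinarith [(Nat.cast_nonneg m : (0:ℝ) ≤ m)]
      · nlinarith
      · refine Disjoint.mono inter_subset_right inter_subset_right ?_
        exact (Ico_disjoint_Ico_same)
  rw [hsplit, Finset.mul_sum, ← Finset.sum_sub_distrib]
  set e : ℕ → ℝ := fun j => δ * U.indicator (1 : ℝ → ℝ) (p j)
    - volume.real (U ∩ Ico (x₀ + j * δ) (x₀ + (j + 1) * δ)) with he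
  have hlen : ∀ j : ℕ, volume.real (Ico (x₀ + j * δ) (x₀ + (j + 1) * δ)) = δ := by
    intro j
    rw [Real.volume_real_Ico_of_le (by nlinarith)]; ring
  set bad : Finset ℕ := (Finset.range n).filter fun j =>
    (∃ u ∈ Icc (x₀ + j * δ) (x₀ + (j + 1) * δ), u ∈ U) ∧
    (∃ v ∈ Icc (x₀ + j * δ) (x₀ + (j + 1) * δ), v ∉ U) with hbad
  have hle : ∀ j, |e j| ≤ δ := by
    intro j
    have h1 : volume.real (U ∩ Ico (x₀ + j * δ) (x₀ + (j + 1) * δ)) ≤ δ := by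
      exact (measureReal_mono inter_subset_right measure_Ico_lt_top.ne).trans_eq (hlen j)
    have h2 : 0 ≤ volume.real (U ∩ Ico (x₀ + j * δ) (x₀ + (j + 1) * δ)) := measureReal_nonneg
    simp only [he]
    by_cases h : p j ∈ U
    · simp only [indicator_of_mem h, Pi.one_apply]; rw [abs_le]; constructor <;> linarith
    · simp only [indicator_of_notMem h]; rw [abs_le]; constructor <;> linarith
  have hgood : ∀ j ∈ Finset.range n, j ∉ bad → |e j| = 0 := by
    intro j hj hjb
    have hpj := hp j (Finset.mem_range.1 hj)
    simp only [hbad, Finset.mem_filter, hj, true_and, not_and_or] at hjb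
    push Not at hjb
    rw [abs_eq_zero]
    simp only [he]
    rcases hjb with h | h
    · have h0 : U ∩ Ico (x₀ + j * δ) (x₀ + (j + 1) * δ) = ∅ := by
        ext x; simp only [mem_inter_iff, mem_empty_iff_false, iff_false, not_and]
        intro hx hx'; exact h x (Ico_subset_Icc_self hx') hx
      rw [h0, indicator_of_notMem (h _ hpj)]; simp
    · have h0 : U ∩ Ico (x₀ + j * δ) (x₀ + (j + 1) * δ) = Ico (x₀ + j * δ) (x₀ + (j + 1) * δ) := by
        apply inter_eq_right.2
        exact fun x hx => h x (Ico_subset_Icc_self hx)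
      rw [h0, hlen, indicator_of_mem (h _ hpj)]; simp
  have hcell : ∀ i j : ℕ, i < j → x₀ + (i + 1) * δ ≤ x₀ + j * δ := by
    intro i j hij
    have : (i : ℝ) + 1 ≤ j := by exact_mod_cast hij
    nlinarith
  have hin : ∀ j < n, ∀ u ∈ Icc (x₀ + j * δ) (x₀ + (j + 1) * δ), u ∈ Icc x₀ (x₀ + n * δ) := by
    intro j hj u hu
    have := hcell j n hj
    exact ⟨by nlinarith [hu.1, (Nat.cast_nonneg j : (0:ℝ) ≤ j)], hu.2.trans this⟩
  -- Every cell strictly between two cells that meet `U` lies in `U`, so no three cells are bad.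
  have key : ∀ i ∈ bad, ∀ j ∈ bad, ∀ k ∈ bad, i < j → j < k → False := by
    intro i hi j hj k hk hij hjk
    simp only [hbad, Finset.mem_filter, Finset.mem_range] at hi hj hk
    obtain ⟨hi, ⟨u, hu, huU⟩, -⟩ := hi
    obtain ⟨hj, -, ⟨v, hv, hvU⟩⟩ := hj
    obtain ⟨hk, ⟨w, hw, hwU⟩, -⟩ := hk
    exact hvU (hU.out ⟨huU, hin _ hi _ hu⟩ ⟨hwU, hin _ hk _ hw⟩
      ⟨(hu.2.trans (hcell i j hij)).trans hv.1, (hv.2.trans (hcell j k hjk)).trans hw.1⟩).1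
  have hcard : bad.card ≤ 2 := by
    by_contra! hc
    obtain ⟨i, hi, j, hj, k, hk, hij, hik, hjk⟩ := Finset.two_lt_card.1 hc
    rcases lt_or_gt_of_ne hij with h1 | h1 <;> rcases lt_or_gt_of_ne hik with h2 | h2 <;>
      rcases lt_or_gt_of_ne hjk with h3 | h3 <;>
      first
      | exact key i hi j hj k hk ‹_› ‹_›
      | exact key i hi k hk j hj ‹_› ‹_›
      | exact key j hj i hi k hk ‹_› ‹_›
      | exact key j hj k hk i hi ‹_› ‹_›
      | exact key k hk i hi j hj ‹_› ‹_›
      | exact key k hk j hj i hi ‹_› ‹_›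
  calc |∑ j ∈ Finset.range n, e j| ≤ ∑ j ∈ Finset.range n, |e j| := Finset.abs_sum_le_sum_abs _ _
    _ = ∑ j ∈ bad, |e j| := (Finset.sum_subset (Finset.filter_subset _ _) hgood).symm
    _ ≤ ∑ j ∈ bad, δ := Finset.sum_le_sum fun j _ => hle j
    _ = bad.card * δ := by simp
    _ ≤ 2 * δ := by
      have : (bad.card : ℝ) ≤ 2 := by exact_mod_cast hcard
      gcongr

/-- The bound of `count_error` when the complement of `U` is an interval. -/
lemma count_error_compl (U : Set ℝ) (x₀ δ : ℝ) (n : ℕ) (p : ℕ → ℝ) (hδ : 0 < δ)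
    (hUm : MeasurableSet U) (hU : (Uᶜ ∩ Icc x₀ (x₀ + n * δ)).OrdConnected)
    (hp : ∀ j < n, p j ∈ Icc (x₀ + j * δ) (x₀ + (j + 1) * δ)) :
    |δ * ∑ j ∈ Finset.range n, U.indicator (1 : ℝ → ℝ) (p j)
      - volume.real (U ∩ Ico x₀ (x₀ + n * δ))| ≤ 2 * δ := by
  have h := count_error Uᶜ x₀ δ n p hδ hUm.compl hU hp
  have h1 : volume.real (U ∩ Ico x₀ (x₀ + n * δ)) + volume.real (Uᶜ ∩ Ico x₀ (x₀ + n * δ))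
      = n * δ := by
    rw [inter_comm, inter_comm Uᶜ, ← sdiff_eq, measureReal_inter_add_sdiff hUm measure_Ico_lt_top.ne,
      Real.volume_real_Ico_of_le (by nlinarith [(Nat.cast_nonneg n : (0:ℝ) ≤ n)])]
    ring
  have h2 : ∑ j ∈ Finset.range n, U.indicator (1 : ℝ → ℝ) (p j) +
      ∑ j ∈ Finset.range n, Uᶜ.indicator (1 : ℝ → ℝ) (p j) = n := by
    rw [← Finset.sum_add_distrib]
    have : ∀ x, U.indicator (1 : ℝ → ℝ) x + Uᶜ.indicator (1 : ℝ → ℝ) x = 1 := fun x => by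
      rw [indicator_self_add_compl_apply]; rfl
    simp [this]
  rw [← abs_neg] at h
  convert h using 2
  rw [eq_sub_of_add_eq h1, eq_sub_of_add_eq h2]
  ring


/-! ### The area of a cap in cylindrical coordinates -/

/-- The arcsine law: for `φ` uniform on `(0, π)`, the variable `α + β * cos φ` has density
`1 / √(β ^ 2 - (τ - α) ^ 2)` (up to the factor `π`). Outside `|τ - α| < β` the junk values
`√(negative) = 0` and `1 / 0 = 0` make the integrand vanish, so no indicator is needed. -/
lemma arcsine (α β : ℝ) (hβ : 0 < β) (V : Set ℝ) (hV : MeasurableSet V) :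
    ∫⁻ τ in V, ENNReal.ofReal (1 / √(β ^ 2 - (τ - α) ^ 2)) =
      volume (Ioo 0 Real.pi ∩ {φ | α + β * Real.cos φ ∈ V}) := by
  set f : ℝ → ℝ := fun φ => α + β * Real.cos φ with hf
  have hfc : Continuous f := by fun_prop
  set s := Ioo 0 Real.pi ∩ f ⁻¹' V with hs
  have hsm : MeasurableSet s := measurableSet_Ioo.inter (hfc.measurable hV)
  have himg : f '' s = Ioo (α - β) (α + β) ∩ V := by
    ext τ
    constructor
    · rintro ⟨φ, ⟨⟨h0, h1⟩, h2⟩, rfl⟩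
      refine ⟨?_, h2⟩
      have hs := Real.sin_pos_of_pos_of_lt_pi h0 h1
      have h3 := Real.sin_sq_add_cos_sq φ
      have h4 : Real.cos φ < 1 := by nlinarith
      have h5 : -1 < Real.cos φ := by nlinarith
      constructor <;> simp only [hf] <;> nlinarith
    · rintro ⟨⟨h0, h1⟩, h2⟩
      have e1 : -1 < (τ - α) / β := by rw [lt_div_iff₀ hβ]; linarith
      have e2 : (τ - α) / β < 1 := by rw [div_lt_iff₀ hβ]; linarith
      have e3 : f (Real.arccos ((τ - α) / β)) = τ := by
        simp only [hf]
        rw [Real.cos_arccos e1.le e2.le]; field_simp; ring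
      refine ⟨Real.arccos ((τ - α) / β), ⟨⟨Real.arccos_pos.2 e2, ?_⟩, ?_⟩, e3⟩
      · exact lt_of_le_of_ne (Real.arccos_le_pi _) (fun h => by
          rw [Real.arccos_eq_pi] at h; linarith)
      · rw [mem_preimage, e3]; exact h2
  have hinj : InjOn f s := by
    intro x hx y hy hxy
    refine Real.injOn_cos (Ioo_subset_Icc_self hx.1) (Ioo_subset_Icc_self hy.1) ?_
    simp only [hf] at hxy
    exact mul_left_cancel₀ hβ.ne' (by linarith)
  have h := lintegral_image_eq_lintegral_abs_deriv_mul (f := f) (f' := fun φ => -(β * Real.sin φ))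
    hsm (fun x _ => by
      have := ((Real.hasDerivAt_cos x).const_mul β).const_add α
      rw [mul_neg] at this
      exact this.hasDerivWithinAt) hinj
    (fun τ => ENNReal.ofReal (1 / √(β ^ 2 - (τ - α) ^ 2)))
  rw [himg] at h
  have hR : ∫⁻ x in s, ENNReal.ofReal |-(β * Real.sin x)| *
      ENNReal.ofReal (1 / √(β ^ 2 - (f x - α) ^ 2)) = volume s := by
    rw [← setLIntegral_one]
    refine setLIntegral_congr_fun hsm fun x hx => ?_
    have hs := Real.sin_pos_of_pos_of_lt_pi hx.1.1 hx.1.2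
    have e : β ^ 2 - (f x - α) ^ 2 = (β * Real.sin x) ^ 2 := by
      simp only [hf]
      have := Real.sin_sq_add_cos_sq x
      linear_combination (-β ^ 2) * this
    have hp : 0 < β * Real.sin x := mul_pos hβ hs
    simp only [e, Real.sqrt_sq hp.le, abs_neg, abs_of_pos hp]
    rw [← ENNReal.ofReal_mul hp.le, mul_one_div_cancel hp.ne', ENNReal.ofReal_one]
  rw [hR] at h
  rw [← lintegral_indicator hV]
  rw [← lintegral_indicator (measurableSet_Ioo.inter hV)] at h
  rw [← show s = Ioo 0 Real.pi ∩ {φ | α + β * Real.cos φ ∈ V} from rfl, ← h]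
  congr 1; ext τ
  by_cases h1 : τ ∈ V
  · by_cases h2 : τ ∈ Ioo (α - β) (α + β)
    · rw [indicator_of_mem h1, indicator_of_mem (mem_inter h2 h1)]
    · rw [indicator_of_mem h1, indicator_of_notMem (fun hh => h2 hh.1)]
      have : β ^ 2 - (τ - α) ^ 2 ≤ 0 := by
        by_contra! hc
        have := abs_lt_of_sq_lt_sq' (by linarith : (τ - α) ^ 2 < β ^ 2) hβ.le
        exact h2 ⟨by linarith [this.1], by linarith [this.2]⟩
      simp [Real.sqrt_eq_zero_of_nonpos this]
  · rw [indicator_of_notMem h1, indicator_of_notMem (fun hh => h1 hh.2)]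

/-- The cap `{y | t < ⟨z, y⟩}` in the cylindrical coordinates `(h, φ)`, where `h` is the height and
`φ` the azimuth relative to `z`, and where `z` has height `a` and distance `b` from the axis. -/
def capCyl (a b t : ℝ) : Set (ℝ × ℝ) := {q | t < a * q.1 + b * Real.cos q.2 * √(1 - q.1 ^ 2)}

lemma capCyl_meas (a b t : ℝ) : MeasurableSet (capCyl a b t) := by
  have : Continuous fun q : ℝ × ℝ => a * q.1 + b * Real.cos q.2 * √(1 - q.1 ^ 2) := by fun_prop
  exact measurableSet_lt measurable_const this.measurable

/-- Archimedes: the half-cap `0 < φ < π` has cylindrical area `π * (1 - t)`. By `arcsine`, the length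
of the slice at height `h` is the integral over `τ > t` of a kernel `w h τ`. The kernel is symmetric
in `h` and `τ`, and its integral over either variable is `π` when the other lies in `(-1, 1)`. -/
lemma area_of_pos (a b t : ℝ) (hb : 0 < b) (hab : a ^ 2 + b ^ 2 = 1) (ht : -1 ≤ t) :
    ∫⁻ h in Ioo (-1 : ℝ) 1, volume (Ioo 0 Real.pi ∩ {φ | (h, φ) ∈ capCyl a b t}) =
      ENNReal.ofReal (Real.pi * (1 - t)) := by
  set w : ℝ → ℝ → ENNReal := fun h τ =>
    ENNReal.ofReal (1 / √((1 - a ^ 2) * (1 - h ^ 2) - (τ - a * h) ^ 2)) with hw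
  have hwm : Measurable (Function.uncurry w) := by
    simp only [hw, Function.uncurry_def]; fun_prop
  have hb2 : 1 - a ^ 2 = b ^ 2 := by linarith
  have hsymm : ∀ h τ, w h τ = w τ h := fun h τ => by simp only [hw]; ring_nf
  have hin : ∀ h ∈ Ioo (-1 : ℝ) 1, ∀ V : Set ℝ, MeasurableSet V → ∫⁻ τ in V, w h τ =
      volume (Ioo 0 Real.pi ∩ {φ | a * h + b * √(1 - h ^ 2) * Real.cos φ ∈ V}) := by
    intro h hh V hV
    have hp : 0 < 1 - h ^ 2 := by nlinarith [hh.1, hh.2]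
    rw [← arcsine (a * h) (b * √(1 - h ^ 2)) (mul_pos hb (Real.sqrt_pos.2 hp)) V hV]
    simp only [hw, mul_pow, Real.sq_sqrt hp.le, hb2]
  have hout : ∀ h, h ∉ Ioo (-1 : ℝ) 1 → ∀ τ, w h τ = 0 := by
    intro h hh τ
    have hp : 1 - h ^ 2 ≤ 0 := by
      by_contra! hc
      have := abs_lt_of_sq_lt_sq' (by linarith : h ^ 2 < 1 ^ 2) zero_le_one
      exact hh this
    have : (1 - a ^ 2) * (1 - h ^ 2) - (τ - a * h) ^ 2 ≤ 0 := by
      rw [hb2]; nlinarith [sq_nonneg (τ - a * h), mul_nonneg (sq_nonneg b) (neg_nonneg.2 hp)]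
    simp only [hw, Real.sqrt_eq_zero_of_nonpos this]; simp
  calc ∫⁻ h in Ioo (-1 : ℝ) 1, volume (Ioo 0 Real.pi ∩ {φ | (h, φ) ∈ capCyl a b t})
      = ∫⁻ h in Ioo (-1 : ℝ) 1, ∫⁻ τ in Ioi t, w h τ := by
        refine setLIntegral_congr_fun measurableSet_Ioo fun h hh => ?_
        simp only [hin h hh _ measurableSet_Ioi]
        congr 2; ext φ; simp only [capCyl, mem_ofPred_eq, mem_Ioi, mul_right_comm]
    _ = ∫⁻ τ in Ioi t, ∫⁻ h in Ioo (-1 : ℝ) 1, w h τ :=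
        lintegral_lintegral_swap hwm.aemeasurable
    _ = ∫⁻ τ in Ioi t, (Ioo (-1 : ℝ) 1).indicator (fun _ => ENNReal.ofReal Real.pi) τ := by
        refine lintegral_congr fun τ => ?_
        have e : ∫⁻ h in Ioo (-1 : ℝ) 1, w h τ = ∫⁻ h in univ, w τ h := by
          rw [← lintegral_indicator measurableSet_Ioo, Measure.restrict_univ]
          refine lintegral_congr fun h => ?_
          by_cases hh : h ∈ Ioo (-1 : ℝ) 1
          · rw [indicator_of_mem hh, hsymm]
          · rw [indicator_of_notMem hh, hsymm, hout h hh]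
        rw [e]
        by_cases hτ : τ ∈ Ioo (-1 : ℝ) 1
        · rw [hin τ hτ _ MeasurableSet.univ, indicator_of_mem hτ]
          simp
        · rw [indicator_of_notMem hτ]
          simp [hout τ hτ]
    _ = ENNReal.ofReal (Real.pi * (1 - t)) := by
        rw [lintegral_indicator measurableSet_Ioo, setLIntegral_const,
          Measure.restrict_apply measurableSet_Ioo, ENNReal.ofReal_mul Real.pi_pos.le]
        congr 1
        have : Ioo (-1 : ℝ) 1 ∩ Ioi t = Ioo t 1 := by
          ext x; simp only [mem_inter_iff, mem_Ioo, mem_Ioi]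
          constructor
          · rintro ⟨⟨_, h⟩, h'⟩; exact ⟨h', h⟩
          · rintro ⟨h', h⟩; exact ⟨⟨by linarith, h⟩, h'⟩
        rw [this, Real.volume_Ioo]

lemma area_swap (a b t : ℝ) :
    ∫⁻ h in Ioo (-1 : ℝ) 1, volume (Ioo 0 Real.pi ∩ {φ | (h, φ) ∈ capCyl a b t}) =
    ∫⁻ φ in Ioo 0 Real.pi, volume (Ioo (-1 : ℝ) 1 ∩ {h | (h, φ) ∈ capCyl a b t}) := by
  have h1 := Measure.prod_apply (μ := volume.restrict (Ioo (-1 : ℝ) 1))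
    (ν := volume.restrict (Ioo 0 Real.pi)) (capCyl_meas a b t)
  rw [Measure.prod_apply_symm (capCyl_meas a b t)] at h1
  have m1 : ∀ h : ℝ, MeasurableSet (Prod.mk h ⁻¹' capCyl a b t) := fun h =>
    measurable_prodMk_left (capCyl_meas a b t)
  have m2 : ∀ φ : ℝ, MeasurableSet ((fun h => (h, φ)) ⁻¹' capCyl a b t) := fun φ =>
    measurable_prodMk_right (capCyl_meas a b t)
  simp only [Measure.restrict_apply (m1 _), Measure.restrict_apply (m2 _)] at h1
  simp only [inter_comm (Ioo _ _)]
  exact h1.symm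

/-- The area of a half-cap, integrated over meridians; `b = 0` is the case of a horizontal cap, to
which `arcsine` does not apply. -/
lemma area (a b t : ℝ) (hb : 0 ≤ b) (hab : a ^ 2 + b ^ 2 = 1) (ht : -1 ≤ t) (ht1 : t ≤ 1) :
    ∫⁻ φ in Ioo 0 Real.pi, volume (Ioo (-1 : ℝ) 1 ∩ {h | (h, φ) ∈ capCyl a b t}) =
      ENNReal.ofReal (Real.pi * (1 - t)) := by
  rcases hb.eq_or_lt with rfl | hb
  · have : ∀ φ : ℝ, volume (Ioo (-1 : ℝ) 1 ∩ {h | (h, φ) ∈ capCyl a 0 t})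
        = ENNReal.ofReal (1 - t) := by
      intro φ
      have ha : (a - 1) * (a + 1) = 0 := by linarith
      rcases mul_eq_zero.1 ha with ha | ha
      · obtain rfl : a = 1 := by linarith
        have : Ioo (-1 : ℝ) 1 ∩ {h | (h, φ) ∈ capCyl 1 0 t} = Ioo t 1 := by
          ext x; simp only [mem_inter_iff, mem_Ioo, mem_ofPred_eq, capCyl]
          constructor
          · rintro ⟨⟨_, h⟩, h'⟩; exact ⟨by linarith, h⟩
          · rintro ⟨h', h⟩; exact ⟨⟨by linarith, h⟩, by linarith⟩
        rw [this, Real.volume_Ioo]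
      · obtain rfl : a = -1 := by linarith
        have : Ioo (-1 : ℝ) 1 ∩ {h | (h, φ) ∈ capCyl (-1) 0 t} = Ioo (-1) (-t) := by
          ext x; simp only [mem_inter_iff, mem_Ioo, mem_ofPred_eq, capCyl]
          constructor
          · rintro ⟨⟨h, _⟩, h'⟩; exact ⟨h, by linarith⟩
          · rintro ⟨h, h'⟩; exact ⟨⟨h, by linarith⟩, by linarith⟩
        rw [this, Real.volume_Ioo]; congr 1; ring
    simp only [this, setLIntegral_const, Real.volume_Ioo]
    rw [← ENNReal.ofReal_mul (by linarith)]; congr 1; ring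
  · rw [← area_swap, area_of_pos a b t hb hab ht]

/-! ### Errors along a meridian and along a ring -/

lemma concave_sqrt_one_sub_sq : ConcaveOn ℝ (Icc (-1 : ℝ) 1) fun h => √(1 - h ^ 2) := by
  refine ⟨convex_Icc _ _, fun x hx y hy u v hu hv huv => ?_⟩
  have hx' : 0 ≤ 1 - x ^ 2 := by nlinarith [hx.1, hx.2]
  have hy' : 0 ≤ 1 - y ^ 2 := by nlinarith [hy.1, hy.2]
  have h1 := Real.strictConcaveOn_sqrt.concaveOn.2 (mem_Ici.2 hx') (mem_Ici.2 hy') hu hv huv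
  refine h1.trans (Real.sqrt_le_sqrt ?_)
  simp only [smul_eq_mul]
  obtain rfl : v = 1 - u := by linarith
  nlinarith [mul_nonneg (mul_nonneg hu hv) (sq_nonneg (x - y))]

/-- Along a meridian, heights taken one per cell count the length of the cap up to `3 * δ`. The cap
meets the meridian in a superlevel set of `a * h + c * √(1 - h ^ 2)`, which is an interval or the
complement of one according to the sign of `c`. The `R` cells may leave uncovered a piece of length
at most `δ` at the upper end. -/
lemma meridian (a c t δ : ℝ) (R : ℕ) (p : ℕ → ℝ) (hδ : 0 < δ) (h1 : R * δ ≤ 2)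
    (h2 : 2 ≤ (R + 1) * δ) (hp : ∀ j < R, p j ∈ Icc (-1 + j * δ) (-1 + (j + 1) * δ)) :
    |δ * ∑ j ∈ Finset.range R, {h : ℝ | t < a * h + c * √(1 - h ^ 2)}.indicator (1 : ℝ → ℝ) (p j)
      - volume.real (Ioo (-1) 1 ∩ {h : ℝ | t < a * h + c * √(1 - h ^ 2)})| ≤ 3 * δ := by
  set U : Set ℝ := {h : ℝ | t < a * h + c * √(1 - h ^ 2)} with hU
  have hUm : MeasurableSet U := measurableSet_lt measurable_const
    (by fun_prop : Continuous fun h : ℝ => a * h + c * √(1 - h ^ 2)).measurable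
  have hlin : ConcaveOn ℝ (Icc (-1 : ℝ) 1) fun h => a * h :=
    ⟨convex_Icc _ _, fun x _ y _ u v _ _ _ => by simp only [smul_eq_mul]; linarith⟩
  have hlin' : ConvexOn ℝ (Icc (-1 : ℝ) 1) fun h => a * h :=
    ⟨convex_Icc _ _, fun x _ y _ u v _ _ _ => by simp only [smul_eq_mul]; linarith⟩
  have hsub : Icc (-1 : ℝ) (-1 + R * δ) ⊆ Icc (-1) 1 := Icc_subset_Icc_right (by linarith)
  have hmain : |δ * ∑ j ∈ Finset.range R, U.indicator (1 : ℝ → ℝ) (p j)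
      - volume.real (U ∩ Ico (-1) (-1 + R * δ))| ≤ 2 * δ := by
    rcases le_total 0 c with hc | hc
    · refine count_error U (-1) δ R p hδ hUm ?_ hp
      have h3 := (hlin.add (concave_sqrt_one_sub_sq.smul hc)).convex_gt t
      have h4 := h3.ordConnected.inter (ordConnected_Icc (a := (-1 : ℝ)) (b := -1 + R * δ))
      rw [show U ∩ Icc (-1) (-1 + R * δ) = _ from ?_]
      · exact h4
      refine Set.ext fun x => ?_
      constructor
      · rintro ⟨h5, h6⟩; exact ⟨⟨hsub h6, h5⟩, h6⟩
      · rintro ⟨⟨_, h5⟩, h6⟩; exact ⟨h5, h6⟩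
    · refine count_error_compl U (-1) δ R p hδ hUm ?_ hp
      have h3 := (hlin'.add (concave_sqrt_one_sub_sq.neg.smul (neg_nonneg.2 hc))).convex_le t
      have h4 := h3.ordConnected.inter (ordConnected_Icc (a := (-1 : ℝ)) (b := -1 + R * δ))
      rw [show Uᶜ ∩ Icc (-1) (-1 + R * δ) = _ from ?_]
      · exact h4
      refine Set.ext fun x => ?_
      simp only [hU, mem_inter_iff, mem_compl_iff, mem_ofPred_eq, not_lt, Pi.add_apply,
        Pi.neg_apply, smul_eq_mul, neg_mul_neg]
      constructor
      · rintro ⟨h5, h6⟩; exact ⟨⟨hsub h6, h5⟩, h6⟩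
      · rintro ⟨⟨_, h5⟩, h6⟩; exact ⟨h5, h6⟩
  have hR0 : 0 ≤ R * δ := by positivity
  have e1 : volume.real (Ioo (-1) 1 ∩ U) = volume.real (U ∩ Ico (-1) 1) := by
    rw [inter_comm]
    exact measureReal_congr (Filter.EventuallyEq.rfl.inter Ioo_ae_eq_Ico)
  have e2 : volume.real (U ∩ Ico (-1) 1) ≤
      volume.real (U ∩ Ico (-1) (-1 + R * δ)) + volume.real (Ico (-1 + R * δ) 1) := by
    refine (measureReal_mono ?_ (measure_union_lt_top
      (measure_lt_top_of_subset inter_subset_right measure_Ico_lt_top.ne)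
      measure_Ico_lt_top).ne).trans (measureReal_union_le _ _)
    rintro x ⟨h3, h4⟩
    rcases lt_or_ge x (-1 + R * δ) with h5 | h5
    · exact Or.inl ⟨h3, h4.1, h5⟩
    · exact Or.inr ⟨h5, h4.2⟩
  have e3 : volume.real (U ∩ Ico (-1) (-1 + R * δ)) ≤ volume.real (U ∩ Ico (-1) 1) :=
    measureReal_mono (inter_subset_inter_right _ (Ico_subset_Ico_right (by linarith)))
      (measure_ne_top_of_subset inter_subset_right measure_Ico_lt_top.ne)
  rw [Real.volume_real_Ico_of_le (by linarith)] at e2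
  rw [abs_le] at hmain ⊢
  constructor <;> linarith [hmain.1, hmain.2]

/-- A superlevel set of `α + β * cos` within one period `[s - π, s + π)` centred at a maximum of
`cos` is an interval. -/
lemma arc_ordConnected (α β t s : ℝ) (hβ : 0 ≤ β) (hs : ∀ x, Real.cos x = Real.cos (x - s)) :
    ({φ | t < α + β * Real.cos φ} ∩ Ico (s - Real.pi) (s + Real.pi)).OrdConnected := by
  refine ⟨fun x hx z hz y hy => ⟨?_, hx.2.1.trans hy.1, hy.2.trans_lt hz.2.2⟩⟩
  obtain ⟨hx, hx1, hx2⟩ := hx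
  obtain ⟨hz, hz1, hz2⟩ := hz
  simp only [mem_ofPred_eq] at hx hz ⊢
  rcases le_total s y with h | h
  · have := Real.cos_le_cos_of_nonneg_of_le_pi (by linarith : 0 ≤ y - s) (by linarith : z - s ≤ Real.pi)
      (by linarith [hy.2])
    rw [← hs, ← hs] at this
    nlinarith
  · have := Real.cos_le_cos_of_nonneg_of_le_pi (by linarith : 0 ≤ s - y) (by linarith : s - x ≤ Real.pi)
      (by linarith [hy.1])
    rw [← neg_sub x, ← neg_sub y, Real.cos_neg, Real.cos_neg, ← hs, ← hs] at this
    nlinarith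

lemma arc_period (α β t x₀ : ℝ) :
    volume.real ({φ | t < α + β * Real.cos φ} ∩ Ico x₀ (x₀ + 2 * Real.pi)) =
      2 * volume.real (Ioo 0 Real.pi ∩ {φ | t < α + β * Real.cos φ}) := by
  set T : Set ℝ := {φ | t < α + β * Real.cos φ} with hT
  have hTm : MeasurableSet T := measurableSet_lt measurable_const
    (by fun_prop : Continuous fun φ : ℝ => α + β * Real.cos φ).measurable
  have hpi := Real.pi_pos
  have hint : ∀ u v : ℝ, IntervalIntegrable (T.indicator (1 : ℝ → ℝ)) volume u v := fun u v =>
    ⟨(integrableOn_const measure_Ioc_lt_top.ne (C := (1 : ℝ))).indicator hTm,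
      (integrableOn_const measure_Ioc_lt_top.ne (C := (1 : ℝ))).indicator hTm⟩
  have hper : Function.Periodic (T.indicator (1 : ℝ → ℝ)) (2 * Real.pi) := by
    intro x
    simp only [indicator, hT, mem_ofPred_eq, Real.cos_add_two_pi, Pi.one_apply]
  have heven : ∀ x, T.indicator (1 : ℝ → ℝ) (-x) = T.indicator (1 : ℝ → ℝ) x := by
    intro x
    simp only [indicator, hT, mem_ofPred_eq, Real.cos_neg, Pi.one_apply]
  have e1 : ∫ x in x₀..x₀ + 2 * Real.pi, T.indicator (1 : ℝ → ℝ) x =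
      volume.real (T ∩ Ico x₀ (x₀ + 2 * Real.pi)) := by
    rw [intervalIntegral.integral_of_le (by linarith), ← integral_Ico_eq_integral_Ioc,
      integral_indicator_one hTm, measureReal_restrict_apply hTm]
  have e2 : ∫ x in (0 : ℝ)..Real.pi, T.indicator (1 : ℝ → ℝ) x =
      volume.real (Ioo 0 Real.pi ∩ T) := by
    rw [intervalIntegral.integral_of_le hpi.le, integral_Ioc_eq_integral_Ioo,
      integral_indicator_one hTm, measureReal_restrict_apply hTm, inter_comm]
  have e3 := intervalIntegral.integral_comp_neg (a := 0) (b := Real.pi) (T.indicator (1 : ℝ → ℝ))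
  simp only [heven, neg_zero] at e3
  have e4 := hper.intervalIntegral_add_eq x₀ (-Real.pi)
  rw [← e1, e4, ← e2, show -Real.pi + 2 * Real.pi = Real.pi by ring,
    ← intervalIntegral.integral_add_adjacent_intervals (hint (-Real.pi) 0) (hint 0 Real.pi), ← e3]
  ring

/-- Along a horizontal ring, `M` equally spaced points count the arc in the cap up to four spacings:
the arc meets one turn starting at `x₀` in at most two intervals, one in each of the periods
`[-π, π)` and `[π, 3π)`. -/
lemma ring_count (α β t x₀ : ℝ) (hβ : 0 ≤ β) (M : ℕ) (hM : 0 < M) (hx : x₀ ∈ Icc (-Real.pi) Real.pi) :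
    |2 * Real.pi / M * ∑ k ∈ Finset.range M,
        {φ | t < α + β * Real.cos φ}.indicator (1 : ℝ → ℝ) (x₀ + k * (2 * Real.pi / M))
      - 2 * volume.real (Ioo 0 Real.pi ∩ {φ | t < α + β * Real.cos φ})| ≤
      4 * (2 * Real.pi / M) := by
  rw [← arc_period α β t x₀]
  set T : Set ℝ := {φ | t < α + β * Real.cos φ} with hT
  have hTm : MeasurableSet T := measurableSet_lt measurable_const
    (by fun_prop : Continuous fun φ : ℝ => α + β * Real.cos φ).measurable
  have hpi := Real.pi_pos
  have hM' : (0 : ℝ) < M := by exact_mod_cast hM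
  set δ := 2 * Real.pi / M with hδd
  have hδ : 0 < δ := by positivity
  have hMδ : M * δ = 2 * Real.pi := by rw [hδd]; field_simp
  set I₁ := Ico (0 - Real.pi) (0 + Real.pi)
  set I₂ := Ico (2 * Real.pi - Real.pi) (2 * Real.pi + Real.pi)
  have hp : ∀ k < M, x₀ + k * δ ∈ Icc (x₀ + k * δ) (x₀ + (k + 1) * δ) := fun k _ =>
    ⟨le_rfl, by nlinarith⟩
  have c1 := count_error (T ∩ I₁) x₀ δ M (fun k => x₀ + k * δ) hδ (hTm.inter measurableSet_Ico)
    ((arc_ordConnected α β t 0 hβ (fun x => by simp)).inter ordConnected_Icc) hp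
  have c2 := count_error (T ∩ I₂) x₀ δ M (fun k => x₀ + k * δ) hδ (hTm.inter measurableSet_Ico)
    ((arc_ordConnected α β t (2 * Real.pi) hβ
      (fun x => (Real.cos_sub_two_pi x).symm)).inter ordConnected_Icc) hp
  rw [hMδ] at c1 c2
  have hdisj : Disjoint I₁ I₂ := by
    rw [disjoint_left]; rintro x ⟨_, h⟩ ⟨h', _⟩; linarith
  have hcov : ∀ x ∈ Ico x₀ (x₀ + 2 * Real.pi), x ∈ I₁ ∪ I₂ := by
    intro x h
    rcases lt_or_ge x Real.pi with h1 | h1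
    · exact Or.inl ⟨by linarith [hx.1, h.1], by linarith⟩
    · exact Or.inr ⟨by linarith, by linarith [hx.2, h.2]⟩
  have hs : ∑ k ∈ Finset.range M, T.indicator (1 : ℝ → ℝ) (x₀ + k * δ) =
      ∑ k ∈ Finset.range M, (T ∩ I₁).indicator (1 : ℝ → ℝ) (x₀ + k * δ) +
      ∑ k ∈ Finset.range M, (T ∩ I₂).indicator (1 : ℝ → ℝ) (x₀ + k * δ) := by
    rw [← Finset.sum_add_distrib]
    refine Finset.sum_congr rfl fun k hk => ?_
    have hk' : (k : ℝ) < M := by exact_mod_cast Finset.mem_range.1 hk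
    have hmem := hcov (x₀ + k * δ) ⟨by nlinarith [(Nat.cast_nonneg k : (0:ℝ) ≤ k)], by nlinarith⟩
    rw [← congrFun (indicator_union_of_disjoint (f := (1 : ℝ → ℝ))
      (hdisj.mono (inter_subset_right (s := T)) (inter_subset_right (s := T)))) (x₀ + k * δ),
      ← inter_union_distrib_left]
    simp only [indicator, mem_inter_iff, hmem, and_true]
  have hv : volume.real (T ∩ Ico x₀ (x₀ + 2 * Real.pi)) =
      volume.real (T ∩ I₁ ∩ Ico x₀ (x₀ + 2 * Real.pi)) +
      volume.real (T ∩ I₂ ∩ Ico x₀ (x₀ + 2 * Real.pi)) := by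
    rw [← measureReal_union
      (hdisj.mono (inter_subset_left.trans inter_subset_right)
        (inter_subset_left.trans inter_subset_right))
      ((hTm.inter measurableSet_Ico).inter measurableSet_Ico)
      (measure_ne_top_of_subset inter_subset_right measure_Ico_lt_top.ne)
      (measure_ne_top_of_subset inter_subset_right measure_Ico_lt_top.ne)]
    congr 1
    ext x
    constructor
    · rintro ⟨h1, h2⟩
      rcases hcov x h2 with h3 | h3
      · exact Or.inl ⟨⟨h1, h3⟩, h2⟩
      · exact Or.inr ⟨⟨h1, h3⟩, h2⟩
    · rintro (⟨⟨h1, _⟩, h2⟩ | ⟨⟨h1, _⟩, h2⟩) <;> exact ⟨h1, h2⟩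
  rw [hs, hv]
  rw [abs_le] at c1 c2 ⊢
  constructor <;> linarith [c1.1, c1.2, c2.1, c2.2]

/-- The estimate of `meridian` integrated over `φ ∈ (0, π)`: the lengths of the half-arcs cut by the
cap on the rings at heights `p j` form a quadrature sum for the area of the half-cap. -/
lemma averaged (a b t δ : ℝ) (hb : 0 ≤ b) (hab : a ^ 2 + b ^ 2 = 1) (ht : -1 ≤ t) (ht1 : t ≤ 1)
    (R : ℕ) (p : ℕ → ℝ) (hδ : 0 < δ) (h1 : R * δ ≤ 2)
    (h2 : 2 ≤ (R + 1) * δ) (hp : ∀ j < R, p j ∈ Icc (-1 + j * δ) (-1 + (j + 1) * δ)) :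
    |δ * ∑ j ∈ Finset.range R, volume.real (Ioo 0 Real.pi ∩ {φ | (p j, φ) ∈ capCyl a b t})
      - Real.pi * (1 - t)| ≤ 3 * δ * Real.pi := by
  have hS := capCyl_meas a b t
  have m1 : ∀ h : ℝ, MeasurableSet {φ | (h, φ) ∈ capCyl a b t} := fun h =>
    measurable_prodMk_left hS
  have m2 : ∀ φ : ℝ, MeasurableSet {h | (h, φ) ∈ capCyl a b t} := fun φ =>
    measurable_prodMk_right hS
  have hBm : Measurable fun φ : ℝ => volume (Ioo (-1 : ℝ) 1 ∩ {h | (h, φ) ∈ capCyl a b t}) := by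
    have := measurable_measure_prodMk_right (μ := volume.restrict (Ioo (-1 : ℝ) 1)) hS
    simp only [Measure.restrict_apply (measurable_prodMk_right hS)] at this
    simp only [inter_comm (Ioo (-1 : ℝ) 1)]
    exact this
  have hBfin : ∀ φ : ℝ, volume (Ioo (-1 : ℝ) 1 ∩ {h | (h, φ) ∈ capCyl a b t}) < ⊤ := fun φ =>
    measure_lt_top_of_subset inter_subset_left measure_Ioo_lt_top.ne
  have hBint : ∫ φ in Ioo 0 Real.pi, volume.real (Ioo (-1 : ℝ) 1 ∩ {h | (h, φ) ∈ capCyl a b t})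
      = Real.pi * (1 - t) := by
    simp only [measureReal_def]
    rw [integral_toReal hBm.aemeasurable (Filter.Eventually.of_forall hBfin),
      area a b t hb hab ht ht1, ENNReal.toReal_ofReal]
    exact mul_nonneg Real.pi_pos.le (by linarith)
  have hBI : IntegrableOn
      (fun φ : ℝ => volume.real (Ioo (-1 : ℝ) 1 ∩ {h | (h, φ) ∈ capCyl a b t}))
      (Ioo 0 Real.pi) := by
    refine Measure.integrableOn_of_bounded (M := 2) measure_Ioo_lt_top.ne
      hBm.ennreal_toReal.aestronglyMeasurable (Filter.Eventually.of_forall fun φ => ?_)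
    rw [Real.norm_of_nonneg measureReal_nonneg]
    refine (measureReal_mono inter_subset_left measure_Ioo_lt_top.ne).trans_eq ?_
    rw [Real.volume_real_Ioo_of_le (by norm_num)]; norm_num
  have hAI : ∀ j, IntegrableOn ({φ | (p j, φ) ∈ capCyl a b t}.indicator (1 : ℝ → ℝ))
      (Ioo 0 Real.pi) := fun j =>
    ((integrableOn_const measure_Ioo_lt_top.ne).indicator (m1 _) : IntegrableOn (indicator _ fun _ => (1:ℝ)) _ _)
  have key : δ * ∑ j ∈ Finset.range R, volume.real (Ioo 0 Real.pi ∩ {φ | (p j, φ) ∈ capCyl a b t})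
      - Real.pi * (1 - t) = ∫ φ in Ioo 0 Real.pi,
        (δ * ∑ j ∈ Finset.range R, {φ | (p j, φ) ∈ capCyl a b t}.indicator (1 : ℝ → ℝ) φ
          - volume.real (Ioo (-1 : ℝ) 1 ∩ {h | (h, φ) ∈ capCyl a b t})) := by
    rw [integral_sub ((integrable_finsetSum _ fun j _ => hAI j).const_mul δ) hBI, hBint,
      integral_const_mul, integral_finsetSum _ fun j _ => hAI j]
    congr 3
    ext j
    rw [integral_indicator_one (m1 _), measureReal_restrict_apply (m1 _), inter_comm]
  rw [key, ← Real.norm_eq_abs]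
  refine (norm_setIntegral_le_of_norm_le_const (C := 3 * δ) measure_Ioo_lt_top fun φ _ => ?_).trans_eq ?_
  · exact meridian a (b * Real.cos φ) t δ R p hδ h1 h2 hp
  · rw [Real.volume_real_Ioo_of_le Real.pi_pos.le, sub_zero]

/-! ### The point set -/

/-- The point of the sphere with height `h` and azimuth `θ` (on the sphere when `|h| ≤ 1`). -/
def sphPt (h θ : ℝ) : Esp := !₂[√(1 - h ^ 2) * Real.cos θ, √(1 - h ^ 2) * Real.sin θ, h]

lemma sphPt_norm {h : ℝ} (hh : h ^ 2 ≤ 1) (θ : ℝ) : ‖sphPt h θ‖ = 1 := by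
  rw [EuclideanSpace.norm_eq, Real.sqrt_eq_one]
  simp only [sphPt, Fin.sum_univ_three, Real.norm_eq_abs, sq_abs, PiLp.toLp_apply,
    Matrix.cons_val_zero, Matrix.cons_val_one, Matrix.cons_val, mul_pow,
    Real.sq_sqrt (sub_nonneg.2 hh)]
  linear_combination (1 - h ^ 2) * Real.sin_sq_add_cos_sq θ

/-- Cylindrical coordinates of the centre `z` of a cap: height `a`, distance `b` from the axis and
azimuth `-φ`. -/
lemma polar_s1 (z : Esp) (hz : ‖z‖ = 1) : ∃ a b φ : ℝ, 0 ≤ b ∧ a ^ 2 + b ^ 2 = 1 ∧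
    φ ∈ Icc (-Real.pi) Real.pi ∧
    ∀ h θ, inner ℝ z (sphPt h θ) = a * h + b * Real.cos (θ + φ) * √(1 - h ^ 2) := by
  set w : ℂ := ⟨z 0, z 1⟩ with hw
  have h1 : ‖w‖ * Real.cos w.arg = z 0 := Complex.norm_mul_cos_arg w
  have h2 : ‖w‖ * Real.sin w.arg = z 1 := Complex.norm_mul_sin_arg w
  refine ⟨z 2, ‖w‖, -w.arg, norm_nonneg _, ?_, ?_, fun h θ => ?_⟩
  · rw [EuclideanSpace.norm_eq, Real.sqrt_eq_one] at hz
    simp only [Fin.sum_univ_three, Real.norm_eq_abs, sq_abs] at hz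
    linear_combination hz - ‖w‖ ^ 2 * Real.sin_sq_add_cos_sq w.arg +
      (‖w‖ * Real.cos w.arg + z 0) * h1 + (‖w‖ * Real.sin w.arg + z 1) * h2
  · exact ⟨by linarith [Complex.arg_le_pi w], by linarith [Complex.neg_pi_lt_arg w]⟩
  · simp only [sphPt, PiLp.inner_apply, Fin.sum_univ_three,
      Matrix.cons_val_zero, Matrix.cons_val_one, Matrix.cons_val, RCLike.inner_apply, conj_trivial]
    rw [Real.cos_add, Real.cos_neg, Real.sin_neg]
    linear_combination (-√(1 - h ^ 2) * Real.cos θ) * h1 - (√(1 - h ^ 2) * Real.sin θ) * h2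

/-- The height of the `j`-th ring: slightly above the bottom of the slab `[-1 + j * δ, -1 + (j + 1) * δ]`
with `δ = 2 * M / N`. The offset `1 / N` keeps every ring, including a last incomplete one, strictly
between the poles. -/
def ringHeight (N M j : ℕ) : ℝ := -1 + (2 * j * M + 1) / N

/-- The `i`-th point: points are placed `M` to a ring, equally spaced, on rings `0, 1, 2, …`. -/
def latticePt (N M i : ℕ) : Esp := sphPt (ringHeight N M (i / M)) (i * (2 * Real.pi / M))

lemma ringHeight_mem {N M i : ℕ} (hi : i < N) : ringHeight N M (i / M) ∈ Ioo (-1 : ℝ) 1 := by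
  have hN : (0 : ℝ) < N := by exact_mod_cast (Nat.zero_le i).trans_lt hi
  have h1 : ((i / M : ℕ) : ℝ) * M ≤ i := by exact_mod_cast Nat.div_mul_le_self i M
  have h2 : (i : ℝ) + 1 ≤ N := by exact_mod_cast hi
  have h3 : (0 : ℝ) < 2 * ((i / M : ℕ) : ℝ) * M + 1 := by positivity
  refine ⟨by unfold ringHeight; linarith [div_pos h3 hN], ?_⟩
  have : (2 * ((i / M : ℕ) : ℝ) * M + 1) / N < 2 := by
    rw [div_lt_iff₀ hN]; linarith
  unfold ringHeight; linarith

lemma latticePt_injOn {N M : ℕ} (hM : 0 < M) : InjOn (latticePt N M) (Finset.range N) := by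
  intro i hi i' hi' h
  have hi := Finset.mem_range.1 hi
  have hN : (0 : ℝ) < N := by exact_mod_cast (Nat.zero_le i).trans_lt hi
  have hM' : (0 : ℝ) < M := by exact_mod_cast hM
  have e0 := congrArg (fun v : Esp => v 0) h
  have e1 := congrArg (fun v : Esp => v 1) h
  have e2 := congrArg (fun v : Esp => v 2) h
  simp only [latticePt, sphPt, PiLp.toLp_apply, Matrix.cons_val_zero, Matrix.cons_val_one,
    Matrix.cons_val] at e0 e1 e2
  have hmem := ringHeight_mem (M := M) hi
  have hp : 0 < √(1 - ringHeight N M (i / M) ^ 2) :=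
    Real.sqrt_pos.2 (by nlinarith [hmem.1, hmem.2])
  rw [← e2] at e0 e1
  have e0 := mul_left_cancel₀ hp.ne' e0
  have e1 := mul_left_cancel₀ hp.ne' e1
  have hdiv : i / M = i' / M := by
    unfold ringHeight at e2
    have e3 : (2 * ((i / M : ℕ) : ℝ) * M + 1) / N = (2 * ((i' / M : ℕ) : ℝ) * M + 1) / N := by linarith
    rw [div_left_inj' hN.ne'] at e3
    have e4 : ((i / M : ℕ) : ℝ) * M = ((i' / M : ℕ) : ℝ) * M := by linarith
    exact_mod_cast mul_right_cancel₀ hM'.ne' e4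
  have hcos : Real.cos (i * (2 * Real.pi / M) - i' * (2 * Real.pi / M)) = 1 := by
    rw [Real.cos_sub, e0, e1]
    linear_combination Real.sin_sq_add_cos_sq (i' * (2 * Real.pi / M))
  have d1 := Nat.div_add_mod i M
  have d2 := Nat.div_add_mod i' M
  have d3 := Nat.mod_lt i hM
  have d4 := Nat.mod_lt i' hM
  rw [hdiv] at d1
  have l1 : (i : ℝ) < i' + M := by exact_mod_cast (by omega : i < i' + M)
  have l2 : (i' : ℝ) < i + M := by exact_mod_cast (by omega : i' < i + M)
  have hδ : 0 < 2 * Real.pi / M := by have := Real.pi_pos; positivity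
  have hMδ : M * (2 * Real.pi / M) = 2 * Real.pi := by field_simp
  rw [Real.cos_eq_one_iff_of_lt_of_lt (by nlinarith) (by nlinarith)] at hcos
  have : (i : ℝ) = i' := by
    have := sub_eq_zero.1 hcos
    exact mul_right_cancel₀ hδ.ne' this
  exact_mod_cast this

lemma sum_blocks (F : ℕ → ℝ) (M R r : ℕ) : ∑ i ∈ Finset.range (R * M + r), F i =
    ∑ j ∈ Finset.range R, ∑ k ∈ Finset.range M, F (j * M + k) +
      ∑ k ∈ Finset.range r, F (R * M + k) := by
  rw [Finset.sum_range_add]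
  congr 1
  induction R with
  | zero => simp
  | succ R ih => rw [Finset.sum_range_succ, ← ih, add_one_mul, Finset.sum_range_add]

/-- With `M = ⌊√N⌋` points on each ring there are at most `3 * M` full rings. Their arc errors
(`ring_count`), the quadrature error (`averaged`) and the fewer than `M` points of the incomplete
ring are each `O(M)`. -/
lemma count_bound (N : ℕ) (hN : 1 ≤ N) (z : Esp) (hz : ‖z‖ = 1) (t : ℝ) (ht : -1 ≤ t) (ht1 : t ≤ 1) :
    |∑ i ∈ Finset.range N, {y : Esp | t < inner ℝ z y}.indicator (1 : Esp → ℝ)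
        (latticePt N N.sqrt i) - N * ((1 - t) / 2)| ≤ 16 * N.sqrt := by
  obtain ⟨a, b, x₀, hb, hab, hx, hin⟩ := polar_s1 z hz
  set M := N.sqrt with hMd
  have hM : 0 < M := Nat.sqrt_pos.2 hN
  set R := N / M
  set r := N % M
  have hNR : R * M + r = N := by rw [mul_comm]; exact Nat.div_add_mod N M
  have hr : r < M := Nat.mod_lt _ hM
  have hRM : R ≤ 3 * M := by
    have h1 : N ≤ M * M + M + M := Nat.sqrt_le_add N
    have : R ≤ M + 2 := by
      by_contra! hc
      nlinarith
    omega
  have hpi := Real.pi_pos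
  have hN' : (0 : ℝ) < N := by exact_mod_cast hN
  have hM' : (0 : ℝ) < M := by exact_mod_cast hM
  have hM1 : (1 : ℝ) ≤ M := by exact_mod_cast hM
  have hNR' : (R : ℝ) * M + r = N := by exact_mod_cast hNR
  have hr' : (r : ℝ) ≤ M := by exact_mod_cast hr.le
  have hr0 : (0 : ℝ) ≤ r := by positivity
  have hRM' : (R : ℝ) ≤ 3 * M := by exact_mod_cast hRM
  set δ : ℝ := 2 * M / N with hδd
  have hδ : 0 < δ := by positivity
  set S := {y : Esp | t < inner ℝ z y}
  set F : ℕ → ℝ := fun i => S.indicator (1 : Esp → ℝ) (latticePt N M i) with hF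
  set A : ℕ → ℝ := fun j =>
    volume.real (Ioo 0 Real.pi ∩ {φ | (ringHeight N M j, φ) ∈ capCyl a b t}) with hA
  have havg : |δ * ∑ j ∈ Finset.range R, A j - Real.pi * (1 - t)| ≤ 3 * δ * Real.pi := by
    refine averaged a b t δ hb hab ht ht1 R (ringHeight N M) hδ ?_ ?_ fun j _ => ?_
    · rw [hδd, mul_div_assoc', div_le_iff₀ hN']; linarith
    · rw [hδd, mul_div_assoc', le_div_iff₀ hN']; linarith
    · have e : ringHeight N M j = -1 + j * δ + 1 / N := by
        rw [hδd]; unfold ringHeight; field_simp; ring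
      have e1 : 1 / (N : ℝ) ≤ δ := by rw [hδd]; gcongr; linarith
      have e2 : 0 < 1 / (N : ℝ) := by positivity
      rw [e]; constructor <;> linarith
  have hring : ∀ j, |Real.pi * ∑ k ∈ Finset.range M, F (j * M + k) - M * A j| ≤ 4 * Real.pi := by
    intro j
    have h := ring_count (a * ringHeight N M j) (b * √(1 - ringHeight N M j ^ 2)) t x₀
      (mul_nonneg hb (Real.sqrt_nonneg _)) M hM hx
    have e1 : {φ | t < a * ringHeight N M j + b * √(1 - ringHeight N M j ^ 2) * Real.cos φ} =
        {φ | (ringHeight N M j, φ) ∈ capCyl a b t} := by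
      refine Set.ext fun φ => ?_
      simp only [capCyl, mem_ofPred_eq, mul_right_comm]
    rw [e1] at h
    have e2 : ∀ k ∈ Finset.range M, {φ | (ringHeight N M j, φ) ∈ capCyl a b t}.indicator
        (1 : ℝ → ℝ) (x₀ + k * (2 * Real.pi / M)) = F (j * M + k) := by
      intro k hk
      have hk := Finset.mem_range.1 hk
      have e3 : (j * M + k) / M = j := by
        rw [mul_comm, Nat.mul_add_div hM, Nat.div_eq_of_lt hk, add_zero]
      have e4 : ((j * M + k : ℕ) : ℝ) * (2 * Real.pi / M) + x₀ =
          x₀ + k * (2 * Real.pi / M) + j * (2 * Real.pi) := by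
        push_cast; field_simp; ring
      simp only [hF, latticePt, e3, indicator, S, mem_ofPred_eq, hin, e4,
        Real.cos_add_nat_mul_two_pi, capCyl, Pi.one_apply]
      congr
    rw [Finset.sum_congr rfl e2] at h
    have e5 : Real.pi * ∑ k ∈ Finset.range M, F (j * M + k) - M * A j =
      (M / 2) * (2 * Real.pi / M * ∑ k ∈ Finset.range M, F (j * M + k) - 2 * A j) := by
        field_simp
    rw [e5, abs_mul, abs_of_pos (by positivity)]
    calc _ ≤ M / 2 * (4 * (2 * Real.pi / M)) := by gcongr
      _ = 4 * Real.pi := by field_simp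
  have hF01 : ∀ i, 0 ≤ F i ∧ F i ≤ 1 := fun i => by
    simp only [hF, indicator]; split_ifs <;> simp
  have hrest0 : 0 ≤ ∑ k ∈ Finset.range r, F (R * M + k) :=
    Finset.sum_nonneg fun k _ => (hF01 _).1
  have hrest1 : ∑ k ∈ Finset.range r, F (R * M + k) ≤ r := by
    refine (Finset.sum_le_sum fun k _ => (hF01 (R * M + k)).2).trans ?_
    simp
  have hsum : |Real.pi * ∑ j ∈ Finset.range R, ∑ k ∈ Finset.range M, F (j * M + k) -
      M * ∑ j ∈ Finset.range R, A j| ≤ R * (4 * Real.pi) := by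
    rw [Finset.mul_sum, Finset.mul_sum, ← Finset.sum_sub_distrib]
    refine (Finset.abs_sum_le_sum_abs _ _).trans ((Finset.sum_le_sum fun j _ => hring j).trans ?_)
    simp
  have havg' : |M * ∑ j ∈ Finset.range R, A j - N * (Real.pi * (1 - t)) / 2| ≤ 3 * M * Real.pi := by
    have e5 : M * ∑ j ∈ Finset.range R, A j - N * (Real.pi * (1 - t)) / 2 =
        N / 2 * (δ * ∑ j ∈ Finset.range R, A j - Real.pi * (1 - t)) := by
      rw [hδd]; field_simp
    rw [e5, abs_mul, abs_of_pos (by positivity)]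
    calc _ ≤ N / 2 * (3 * δ * Real.pi) := by gcongr
      _ = 3 * M * Real.pi := by rw [hδd]; field_simp
  have hblocks := sum_blocks F M R r
  rw [hNR] at hblocks
  change |∑ i ∈ Finset.range N, F i - _| ≤ _
  rw [hblocks]
  set X := ∑ j ∈ Finset.range R, ∑ k ∈ Finset.range M, F (j * M + k)
  set Y := ∑ k ∈ Finset.range r, F (R * M + k)
  rw [abs_le] at hsum havg' ⊢
  have p1 : Real.pi * R ≤ Real.pi * (3 * M) := by gcongr
  have p2 : Real.pi * Y ≤ Real.pi * M := by gcongr; linarith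
  have p3 : 0 ≤ Real.pi * Y := by positivity
  constructor
  · refine le_of_mul_le_mul_left ?_ hpi
    linarith [hsum.1, havg'.1]
  · refine le_of_mul_le_mul_left ?_ hpi
    linarith [hsum.2, havg'.2]

/-- The set of `N` points on rings of `⌊√N⌋` equally spaced points each. -/
def lattice (N : ℕ) : Finset Esp := (Finset.range N).image (latticePt N N.sqrt)

lemma lattice_card (N : ℕ) (hN : 1 ≤ N) : (lattice N).card = N := by
  rw [lattice, Finset.card_image_of_injOn (latticePt_injOn (Nat.sqrt_pos.2 hN)), Finset.card_range]

lemma lattice_filter (N : ℕ) (hN : 1 ≤ N) (z : Esp) (t : ℝ) :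
    (((lattice N).filter fun y => t < inner ℝ z y).card : ℝ) =
      ∑ i ∈ Finset.range N, {y : Esp | t < inner ℝ z y}.indicator (1 : Esp → ℝ)
        (latticePt N N.sqrt i) := by
  rw [Finset.card_filter, lattice, Finset.sum_image (latticePt_injOn (Nat.sqrt_pos.2 hN))]
  push_cast
  rfl

lemma upper (N : ℕ) (hN : 1 ≤ N) (z : Esp) (hz : ‖z‖ = 1) (t : ℝ) (ht : t ∈ Icc (-1 : ℝ) 1) :
    |(((lattice N).filter fun y => t < inner ℝ z y).card : ℝ) / (lattice N).card - (1 - t) / 2| ≤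
      16 / √N := by
  have hN' : (0 : ℝ) < N := by exact_mod_cast hN
  have hs : 0 < √(N : ℝ) := Real.sqrt_pos.2 hN'
  have h := count_bound N hN z hz t ht.1 ht.2
  rw [← lattice_filter N hN] at h
  rw [lattice_card N hN]
  have e : ∀ c : ℝ, c / N - (1 - t) / 2 = (c - N * ((1 - t) / 2)) / N := fun c => by field_simp
  rw [e, abs_div, abs_of_pos hN', div_le_div_iff₀ hN' hs]
  calc _ ≤ 16 * (N.sqrt : ℝ) * √N := by gcongr
    _ ≤ 16 * √N * √N := by gcongr; exact Real.nat_sqrt_le_real_sqrt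
    _ = 16 * N := by rw [mul_assoc, Real.mul_self_sqrt hN'.le]

/-- The cap around the south pole reaching just past the lowest ring has area `3 / (4 * N)` but
contains the `⌊√N⌋` points of that ring. -/
lemma lower (N : ℕ) (hN : 1 ≤ N) : ∃ z : Esp, ‖z‖ = 1 ∧ ∃ t ∈ Icc (-1 : ℝ) 1, 1 / 8 / √N ≤
    |(((lattice N).filter fun y => t < inner ℝ z y).card : ℝ) / (lattice N).card - (1 - t) / 2| := by
  have hN' : (0 : ℝ) < N := by exact_mod_cast hN
  have hN1 : (1 : ℝ) ≤ N := by exact_mod_cast hN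
  have hs : 0 < √(N : ℝ) := Real.sqrt_pos.2 hN'
  have hM : 0 < N.sqrt := Nat.sqrt_pos.2 hN
  have hM1 : (1 : ℝ) ≤ N.sqrt := by exact_mod_cast hM
  -- The lowest ring has height `-1 + 1 / N`; the cap consists of the heights below `-1 + 3 / (2 * N)`.
  refine ⟨sphPt (-1) 0, sphPt_norm (by norm_num) 0, 1 - 3 / 2 / N, ⟨?_, ?_⟩, ?_⟩
  · have : 3 / 2 / (N : ℝ) ≤ 3 / 2 := div_le_self (by norm_num) hN1
    linarith
  · have : 0 < 3 / 2 / (N : ℝ) := by positivity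
    linarith
  rw [lattice_filter N hN, lattice_card N hN]
  have hcount : (N.sqrt : ℝ) ≤ ∑ i ∈ Finset.range N,
      {y : Esp | 1 - 3 / 2 / N < inner ℝ (sphPt (-1) 0) y}.indicator (1 : Esp → ℝ)
        (latticePt N N.sqrt i) := by
    calc (N.sqrt : ℝ) = ∑ i ∈ Finset.range N.sqrt, (1 : ℝ) := by simp
      _ = ∑ i ∈ Finset.range N.sqrt,
          {y : Esp | 1 - 3 / 2 / N < inner ℝ (sphPt (-1) 0) y}.indicator (1 : Esp → ℝ)
            (latticePt N N.sqrt i) := by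
        refine Finset.sum_congr rfl fun i hi => ?_
        rw [indicator_of_mem, Pi.one_apply]
        have e : inner ℝ (sphPt (-1) 0) (latticePt N N.sqrt i) = 1 - 1 / (N : ℝ) := by
          simp [latticePt, sphPt, PiLp.inner_apply, Fin.sum_univ_three, ringHeight,
            Nat.div_eq_of_lt (Finset.mem_range.1 hi)]
          ring
        simp only [mem_ofPred_eq, e]
        have : 1 / (N : ℝ) < 3 / 2 / N := by gcongr; norm_num
        linarith
      _ ≤ _ := by
        refine Finset.sum_le_sum_of_subset_of_nonneg
          (Finset.range_subset_range.2 (Nat.sqrt_le_self N)) fun i _ _ => ?_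
        exact indicator_nonneg (fun _ _ => zero_le_one) _
  refine le_trans ?_ (le_abs_self _)
  have h2 : √(N : ℝ) ≤ 2 * N.sqrt := by
    have := Real.real_sqrt_lt_nat_sqrt_succ (a := N)
    linarith
  have h3 : 1 / 8 / √(N : ℝ) = √(N : ℝ) / 8 / N := by
    rw [div_div, div_div, div_eq_div_iff (by positivity) (by positivity)]
    linear_combination (-8 : ℝ) * Real.mul_self_sqrt hN'.le
  have h4 : (1 - (1 - 3 / 2 / (N : ℝ))) / 2 = 3 / 4 / N := by ring
  rw [h3, h4, ← sub_div]
  gcongr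
  linarith

/-! ### Discrepancy bounds -/

/-- There exist universal constants `c₁, c₂ > 0` such that for every `N ≥ 1` there is
a set of `N` distinct points on `S²` whose spherical cap discrepancy lies between
`c₁/√N` and `c₂/√N`. -/
theorem cap_discrepancy_points_on_sphere :
    ∃ c₁ c₂ : ℝ, 0 < c₁ ∧ 0 < c₂ ∧ ∀ N : ℕ, 1 ≤ N → ∃ ω : Finset Esp,
      ω.card = N ∧ (∀ x ∈ ω, ‖x‖ = 1) ∧
      c₁ / Real.sqrt N ≤ capDiscrepancy ω ∧
      capDiscrepancy ω ≤ c₂ / Real.sqrt N := by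
  refine ⟨1 / 8, 16, by norm_num, by norm_num, fun N hN =>
    ⟨lattice N, lattice_card N hN, ?_, ?_, ?_⟩⟩
  · intro x hx
    obtain ⟨i, hi, rfl⟩ := Finset.mem_image.1 hx
    have := ringHeight_mem (M := N.sqrt) (Finset.mem_range.1 hi)
    exact sphPt_norm (by nlinarith [this.1, this.2]) _
  · obtain ⟨z, hz, t, ht, h⟩ := lower N hN
    refine h.trans (le_trans ?_ (le_ciSup
      (f := fun z : {z : Esp // ‖z‖ = 1} => ⨆ t : Set.Icc (-1 : ℝ) 1,
        |(((lattice N).filter fun y => (t : ℝ) < ⟪(z : Esp), y⟫).card : ℝ) / (lattice N).card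
          - (1 - (t : ℝ)) / 2|) ⟨16 / √N, ?_⟩ ⟨z, hz⟩))
    · refine le_ciSup (f := fun t : Set.Icc (-1 : ℝ) 1 =>
        |(((lattice N).filter fun y => (t : ℝ) < ⟪z, y⟫).card : ℝ) / (lattice N).card
          - (1 - (t : ℝ)) / 2|) ⟨16 / √N, ?_⟩ ⟨t, ht⟩
      rintro _ ⟨s, rfl⟩
      exact upper N hN z hz s s.2
    · rintro _ ⟨w, rfl⟩
      exact Real.iSup_le (fun s => upper N hN w w.2 s s.2) (by positivity)
  · exact Real.iSup_le (fun w => Real.iSup_le (fun s => upper N hN w w.2 s s.2) (by positivity))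
      (by positivity)
end
end
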